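/- arXiv:1109.5135 — 5 statements merged into one kernel-verified Lean document; each statement's English description precedes it below -/
import Mathlib

section
/- Let H be a fixed simple graph on k ≥ 3 vertices with m edges and minimum degree d ≥ 1, and set t = max{ (k² - 2(m+1))/(k(k+1)(m+1)), (2k - d - 3)/(k(d+1)(m-d+2)) }. There is a constant c > 0 depending only on H such that for every n ≥ 1 there exists a learning graph for the subgraph-detection function f_{H,n} whose complexity is at most c · n^{2 - 2/k - t}. -/
/-!
Learning graphs (Belovs) and the subgraph-detection function.
-/

/-- A learning graph for a function `f` with domain `D ⊆ {0,1}^ι`. -/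
structure LearningGraph {ι : Type} [Fintype ι] [DecidableEq ι]
    (D : Set (ι → Bool)) (f : (ι → Bool) → Bool) where
  /-- the vertex set -/
  V : Type
  [fintypeV : Fintype V]
  [decEqV : DecidableEq V]
  /-- the root -/
  root : V
  /-- the directed edge set -/
  E : Finset (V × V)
  /-- a topological ranking witnessing acyclicity -/
  rank : V → ℕ
  acyclic : ∀ e ∈ E, rank e.1 < rank e.2
  /-- the loaded variable indices at each vertex -/
  S : V → Finset ι
  S_root : S root = ∅
  S_mono : ∀ e ∈ E, S e.1 ⊆ S e.2
  /-- the weight function (only its values on `E` matter) -/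
  w : V × V → ℝ
  w_pos : ∀ e ∈ E, 0 < w e
  /-- the flows, one for each 1-input of `f` -/
  p : (ι → Bool) → V × V → ℝ
  /-- the net flow out of the root is 1 -/
  flow_root : ∀ y ∈ D, f y = true →
    ((∑ e ∈ E, if e.1 = root then p y e else 0)
      - ∑ e ∈ E, if e.2 = root then p y e else 0) = 1
  /-- at every non-root vertex, either the flow is conserved, or the vertex is a sink
  (strictly positive net incoming flow) and then its label is a 1-certificate for `y` -/
  flow_cons : ∀ y ∈ D, f y = true → ∀ v : V, v ≠ root →
    ((∑ e ∈ E, if e.2 = v then p y e else 0)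
        - ∑ e ∈ E, if e.1 = v then p y e else 0) = 0 ∨
      (0 < ((∑ e ∈ E, if e.2 = v then p y e else 0)
        - ∑ e ∈ E, if e.1 = v then p y e else 0) ∧
        ∀ z ∈ D, (∀ i ∈ S v, z i = y i) → f z = true)

attribute [instance] LearningGraph.fintypeV LearningGraph.decEqV

namespace LearningGraph

variable {ι : Type} [Fintype ι] [DecidableEq ι] {D : Set (ι → Bool)}
  {f : (ι → Bool) → Bool}

/-- The length of a learning graph edge. -/
def len (G : LearningGraph D f) (e : G.V × G.V) : ℕ :=
  (G.S e.2 \ G.S e.1).card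

/-- The negative complexity `C₀`. -/
noncomputable def C0 (G : LearningGraph D f) : ℝ :=
  ∑ e ∈ G.E, (G.len e : ℝ) * G.w e

/-- The positive complexity `C₁`: the maximum over 1-inputs `y`. -/
noncomputable def C1 (G : LearningGraph D f) : ℝ :=
  ⨆ y : {y : ι → Bool // y ∈ D ∧ f y = true},
    ∑ e ∈ G.E, (G.len e : ℝ) * (G.p y.1 e) ^ 2 / G.w e

/-- The complexity of a learning graph. -/
noncomputable def complexity (G : LearningGraph D f) : ℝ :=
  Real.sqrt (G.C0 * G.C1)

end LearningGraph

/-- The edge slots of an `n`-vertex graph: the `C(n,2)` unordered pairs,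
represented by ordered pairs with increasing entries. -/
abbrev EdgeSlot (n : ℕ) := {q : Fin n × Fin n // q.1 < q.2}

/-- `x : EdgeSlot n → Bool` contains a copy of `H` as a (not necessarily induced) subgraph. -/
def HasHCopy {k n : ℕ} (H : SimpleGraph (Fin k)) (x : EdgeSlot n → Bool) : Prop :=
  ∃ φ : Fin k ↪ Fin n, ∀ i j : Fin k, H.Adj i j →
    ∀ q : EdgeSlot n,
      ((q.1.1 = φ i ∧ q.1.2 = φ j) ∨ (q.1.1 = φ j ∧ q.1.2 = φ i)) → x q = true

open Classical in
/-- The subgraph-detection function `f_{H,n}`. -/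
noncomputable def subgraphFn {k : ℕ} (H : SimpleGraph (Fin k)) (n : ℕ) :
    (EdgeSlot n → Bool) → Bool :=
  fun x => if HasHCopy H x then true else false


set_option linter.unusedSectionVars false

/-! ### Part 1: learning graphs from families of paths -/

section PathLG

variable {ι : Type} [Fintype ι] [DecidableEq ι] {f : (ι → Bool) → Bool}
  {V : Type} [Fintype V] [DecidableEq V] {Ω : Type} [Fintype Ω] [DecidableEq Ω]

/-- the `a`-th edge of the path with seed `ω` -/
def pEdge (node : ℕ → Ω → V) (a : ℕ) (ω : Ω) : V × V := (node a ω, node (a + 1) ω)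

/-- the edges at level `a` -/
def lvlEdges (node : ℕ → Ω → V) (a : ℕ) : Finset (V × V) :=
  Finset.univ.image (pEdge node a)

/-- all edges -/
def allEdges (node : ℕ → Ω → V) (N : ℕ) : Finset (V × V) :=
  (Finset.range N).biUnion (lvlEdges node)

/-- flow through `e` when paths are chosen uniformly in `Y` -/
noncomputable def pFlow (node : ℕ → Ω → V) (N : ℕ) (Y : Finset Ω) (e : V × V) : ℝ :=
  (∑ a ∈ Finset.range N, ∑ ω ∈ Y, if pEdge node a ω = e then (1 : ℝ) else 0) / Y.card

lemma pEdge_mem (node : ℕ → Ω → V) {N a : ℕ} (ha : a < N) (ω : Ω) :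
    pEdge node a ω ∈ allEdges node N := by
  unfold allEdges lvlEdges
  simp only [Finset.mem_biUnion, Finset.mem_range, Finset.mem_image, Finset.mem_univ, true_and]
  exact ⟨a, ha, ω, rfl⟩

lemma sum_pFlow (node : ℕ → Ω → V) (N : ℕ) (Y : Finset Ω) (P : V × V → Prop) [DecidablePred P] :
    (∑ e ∈ allEdges node N, if P e then pFlow node N Y e else 0)
      = (∑ ω ∈ Y, ∑ a ∈ Finset.range N, if P (pEdge node a ω) then (1 : ℝ) else 0) / Y.card := by
  have h1 : ∀ e, (if P e then pFlow node N Y e else 0)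
      = (∑ a ∈ Finset.range N, ∑ ω ∈ Y,
          if pEdge node a ω = e then (if P e then (1 : ℝ) else 0) else 0) / Y.card := by
    intro e
    unfold pFlow
    by_cases h : P e <;> simp [h]
  rw [Finset.sum_congr rfl (fun e _ => h1 e), ← Finset.sum_div]
  congr 1
  rw [Finset.sum_comm]
  rw [Finset.sum_comm (s := Y)]
  refine Finset.sum_congr rfl (fun a ha => ?_)
  rw [Finset.sum_comm]
  refine Finset.sum_congr rfl (fun ω _ => ?_)
  rw [Finset.sum_ite_eq]
  rw [if_pos (pEdge_mem node (Finset.mem_range.1 ha) ω)]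

lemma net_pFlow (node : ℕ → Ω → V) (N : ℕ) (Y : Finset Ω) (v : V) :
    ((∑ e ∈ allEdges node N, if e.2 = v then pFlow node N Y e else 0)
      - ∑ e ∈ allEdges node N, if e.1 = v then pFlow node N Y e else 0)
    = (∑ ω ∈ Y, ((if node N ω = v then (1 : ℝ) else 0) - if node 0 ω = v then 1 else 0))
        / Y.card := by
  rw [sum_pFlow node N Y (fun e => e.2 = v), sum_pFlow node N Y (fun e => e.1 = v), ← sub_div,
    ← Finset.sum_sub_distrib]
  congr 1
  refine Finset.sum_congr rfl (fun ω _ => ?_)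
  rw [← Finset.sum_sub_distrib]
  exact Finset.sum_range_sub (fun a => if node a ω = v then (1 : ℝ) else 0) N

lemma pFlow_lvl (node : ℕ → Ω → V) (N : ℕ) (Y : Finset Ω) (lev : V → ℕ)
    (hlev : ∀ a ≤ N, ∀ ω, lev (node a ω) = a) {a : ℕ} (ha : a < N) {e : V × V}
    (he : e ∈ lvlEdges node a) :
    pFlow node N Y e = ((Y.filter (fun ω => pEdge node a ω = e)).card : ℝ) / Y.card := by
  unfold pFlow
  congr 1
  rw [Finset.sum_eq_single a]
  · simp
  · intro b hb hba
    refine Finset.sum_eq_zero (fun ω _ => ?_)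
    rw [if_neg]
    intro h
    unfold lvlEdges at he
    obtain ⟨ω', -, h'⟩ := Finset.mem_image.1 he
    rw [← h'] at h
    have h2 := congrArg (fun e => lev e.1) h
    simp only [pEdge] at h2
    rw [hlev b (Finset.mem_range.1 hb).le, hlev a ha.le] at h2
    exact hba h2
  · intro h; exact absurd (Finset.mem_range.2 ha) h

lemma sum_lvl_sq (node : ℕ → Ω → V) (Y : Finset Ω) (a : ℕ) (g : V × V → ℝ) :
    ∑ e ∈ lvlEdges node a, g e * ((Y.filter (fun ω => pEdge node a ω = e)).card : ℝ) ^ 2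
      = ∑ ω ∈ Y, g (pEdge node a ω) *
          ((Y.filter (fun ω' => pEdge node a ω' = pEdge node a ω)).card : ℝ) := by
  have h1 : ∀ e, g e * ((Y.filter (fun ω => pEdge node a ω = e)).card : ℝ) ^ 2
      = ∑ ω ∈ Y, if pEdge node a ω = e then
          g e * ((Y.filter (fun ω' => pEdge node a ω' = e)).card : ℝ) else 0 := by
    intro e
    rw [← Finset.sum_filter, Finset.sum_const, nsmul_eq_mul]
    ring
  rw [Finset.sum_congr rfl (fun e _ => h1 e), Finset.sum_comm]
  refine Finset.sum_congr rfl (fun ω _ => ?_)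
  rw [Finset.sum_ite_eq, if_pos]
  unfold lvlEdges
  exact Finset.mem_image_of_mem _ (Finset.mem_univ _)

lemma sum_allEdges (node : ℕ → Ω → V) (N : ℕ) (lev : V → ℕ)
    (hlev : ∀ a ≤ N, ∀ ω, lev (node a ω) = a) (F : V × V → ℝ) :
    ∑ e ∈ allEdges node N, F e = ∑ a ∈ Finset.range N, ∑ e ∈ lvlEdges node a, F e := by
  unfold allEdges
  rw [Finset.sum_biUnion]
  intro a ha b hb hab
  simp only [Finset.coe_range, Set.mem_Iio] at ha hb
  rw [Function.onFun, Finset.disjoint_left]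
  intro e h1 h2
  unfold lvlEdges at h1 h2
  obtain ⟨ω, -, h⟩ := Finset.mem_image.1 h1
  obtain ⟨ω', -, h'⟩ := Finset.mem_image.1 h2
  rw [← h'] at h
  have h2 := congrArg (fun e => lev e.1) h
  simp only [pEdge] at h2
  rw [hlev a ha.le, hlev b hb.le] at h2
  exact hab h2

lemma lev_lvl (node : ℕ → Ω → V) {N : ℕ} (lev : V → ℕ)
    (hlev : ∀ a ≤ N, ∀ ω, lev (node a ω) = a) {a : ℕ} (ha : a < N) {e : V × V}
    (he : e ∈ lvlEdges node a) : lev e.1 = a := by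
  unfold lvlEdges at he
  obtain ⟨ω, -, h⟩ := Finset.mem_image.1 he
  rw [← h]
  exact hlev a ha.le ω

lemma sqrt_div_aux {A B : ℝ} (hA : 0 < A) (hB : 0 < B) : A * √(B / A) = √(A * B) := by
  rw [eq_comm, Real.sqrt_eq_iff_mul_self_eq (by positivity) (by positivity), eq_comm]
  have := Real.mul_self_sqrt (show 0 ≤ B / A by positivity)
  calc A * √(B / A) * (A * √(B / A)) = A * A * (√(B / A) * √(B / A)) := by ring
    _ = A * A * (B / A) := by rw [this]
    _ = A * B := by field_simp

lemma sqrt_div_aux' {A B : ℝ} (hA : 0 < A) (hB : 0 < B) : B / √(B / A) = √(A * B) := by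
  rw [← sqrt_div_aux hA hB, div_eq_iff (by positivity), mul_assoc,
    Real.mul_self_sqrt (by positivity)]
  field_simp

theorem pathLG (N : ℕ) (hN : 0 < N) (lev : V → ℕ) (S : V → Finset ι) (node : ℕ → Ω → V)
    (root : V) (hroot : ∀ ω, node 0 ω = root)
    (hlev : ∀ a ≤ N, ∀ ω, lev (node a ω) = a) (hS0 : S root = ∅)
    (hmono : ∀ a < N, ∀ ω, S (node a ω) ⊆ S (node (a + 1) ω))
    (Y : (ι → Bool) → Finset Ω) (hY : ∀ y, f y = true → (Y y).Nonempty)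
    (hcert : ∀ y, f y = true → ∀ ω ∈ Y y, ∀ z : ι → Bool,
      (∀ i ∈ S (node N ω), z i = y i) → f z = true)
    (A B : ℕ → ℝ) (hA : ∀ a < N, 0 < A a) (hB : ∀ a < N, 0 < B a)
    (hA' : ∀ a < N, ∑ e ∈ lvlEdges node a, ((S e.2 \ S e.1).card : ℝ) ≤ A a)
    (hB' : ∀ y, f y = true → ∀ a < N,
      ∑ ω ∈ Y y, ((S (node (a + 1) ω) \ S (node a ω)).card : ℝ) *
          (((Y y).filter (fun ω' => pEdge node a ω' = pEdge node a ω)).card : ℝ)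
        ≤ B a * ((Y y).card : ℝ) ^ 2) :
    ∃ G : LearningGraph (Set.univ : Set (ι → Bool)) f,
      G.complexity ≤ ∑ a ∈ Finset.range N, √(A a * B a) := by
  let G : LearningGraph (Set.univ : Set (ι → Bool)) f :=
    { V := V
      root := root
      E := allEdges node N
      rank := lev
      acyclic := by
        intro e he
        unfold allEdges lvlEdges at he
        simp only [Finset.mem_biUnion, Finset.mem_range, Finset.mem_image, Finset.mem_univ,
          true_and] at he
        obtain ⟨a, ha, ω, rfl⟩ := he
        simp only [pEdge]
        rw [hlev a ha.le, hlev (a + 1) ha]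
        omega
      S := S
      S_root := hS0
      S_mono := by
        intro e he
        unfold allEdges lvlEdges at he
        simp only [Finset.mem_biUnion, Finset.mem_range, Finset.mem_image, Finset.mem_univ,
          true_and] at he
        obtain ⟨a, ha, ω, rfl⟩ := he
        exact hmono a ha ω
      w := fun e => if lev e.1 < N then √(B (lev e.1) / A (lev e.1)) else 1
      w_pos := by
        intro e he
        split_ifs with h
        · exact Real.sqrt_pos.2 (div_pos (hB _ h) (hA _ h))
        · exact one_pos
      p := fun y => pFlow node N (Y y)
      flow_root := by
        intro y _ hy
        have h := net_pFlow node N (Y y) root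
        have hc : (0 : ℝ) < (Y y).card := by exact_mod_cast (hY y hy).card_pos
        have h2 : ∑ ω ∈ Y y, ((if node N ω = root then (1 : ℝ) else 0)
            - if node 0 ω = root then 1 else 0) = - (Y y).card := by
          rw [Finset.sum_congr rfl (g := fun _ => (-1 : ℝ))]
          · simp
          · intro ω _
            rw [if_pos (hroot ω), if_neg]
            · norm_num
            · intro h
              have h1 := hlev N le_rfl ω
              rw [h, ← hroot ω, hlev 0 (Nat.zero_le _)] at h1
              omega
        rw [h2, neg_div, div_self hc.ne'] at h
        linarith
      flow_cons := by
        intro y _ hy v hv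
        have hc : (0 : ℝ) < (Y y).card := by exact_mod_cast (hY y hy).card_pos
        rw [net_pFlow node N (Y y) v]
        have h2 : ∑ ω ∈ Y y, ((if node N ω = v then (1 : ℝ) else 0)
            - if node 0 ω = v then 1 else 0) = ((Y y).filter (fun ω => node N ω = v)).card := by
          rw [Finset.card_filter]
          push_cast
          refine Finset.sum_congr rfl (fun ω _ => ?_)
          rw [if_neg (c := node 0 ω = v), sub_zero]
          rw [hroot]; exact hv.symm
        rw [h2]
        rcases Finset.eq_empty_or_nonempty ((Y y).filter (fun ω => node N ω = v)) with h | h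
        · left; rw [h]; simp
        · right
          refine ⟨div_pos (by exact_mod_cast h.card_pos) hc, ?_⟩
          obtain ⟨ω, hω⟩ := h
          rw [Finset.mem_filter] at hω
          intro z _ hz
          refine hcert y hy ω hω.1 z ?_
          rw [hω.2]; exact hz }
  refine ⟨G, ?_⟩
  have hs0 : 0 ≤ ∑ a ∈ Finset.range N, √(A a * B a) :=
    Finset.sum_nonneg (fun a _ => Real.sqrt_nonneg _)
  have hC0 : G.C0 ≤ ∑ a ∈ Finset.range N, √(A a * B a) := by
    have : G.C0 = ∑ e ∈ allEdges node N, ((S e.2 \ S e.1).card : ℝ) *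
      (if lev e.1 < N then √(B (lev e.1) / A (lev e.1)) else 1) := rfl
    rw [this, sum_allEdges node N lev hlev]
    refine Finset.sum_le_sum (fun a ha => ?_)
    rw [Finset.mem_range] at ha
    rw [← sqrt_div_aux (hA a ha) (hB a ha)]
    rw [Finset.sum_congr rfl (g := fun e => ((S e.2 \ S e.1).card : ℝ) * √(B a / A a))]
    · rw [← Finset.sum_mul]
      exact mul_le_mul_of_nonneg_right (hA' a ha) (Real.sqrt_nonneg _)
    · intro e he
      rw [lev_lvl node lev hlev ha he, if_pos ha]
  have hC1 : G.C1 ≤ ∑ a ∈ Finset.range N, √(A a * B a) := by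
    refine Real.iSup_le ?_ hs0
    rintro ⟨y, -, hy⟩
    change ∑ e ∈ allEdges node N, ((S e.2 \ S e.1).card : ℝ) * (pFlow node N (Y y) e) ^ 2 /
      (if lev e.1 < N then √(B (lev e.1) / A (lev e.1)) else 1) ≤ _
    rw [sum_allEdges node N lev hlev]
    refine Finset.sum_le_sum (fun a ha => ?_)
    rw [Finset.mem_range] at ha
    have hc : (0 : ℝ) < (Y y).card := by exact_mod_cast (hY y hy).card_pos
    rw [← sqrt_div_aux' (hA a ha) (hB a ha)]
    rw [Finset.sum_congr rfl (g := fun e => ((S e.2 \ S e.1).card : ℝ) *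
      (((Y y).filter (fun ω => pEdge node a ω = e)).card : ℝ) ^ 2 /
        ((Y y).card ^ 2 * √(B a / A a)))]
    · rw [← Finset.sum_div, sum_lvl_sq node (Y y) a (fun e => ((S e.2 \ S e.1).card : ℝ))]
      have hw : 0 < √(B a / A a) := Real.sqrt_pos.2 (div_pos (hB _ ha) (hA _ ha))
      rw [div_le_div_iff₀ (by positivity) hw]
      have := hB' y hy a ha
      calc _ ≤ (B a * ((Y y).card : ℝ) ^ 2) * √(B a / A a) :=
            mul_le_mul_of_nonneg_right this hw.le
        _ = _ := by ring
    · intro e he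
      rw [lev_lvl node lev hlev ha he, if_pos ha, pFlow_lvl node N (Y y) lev hlev ha he,
        div_pow, mul_div_assoc', div_div]
  have hC0' : 0 ≤ G.C0 := Finset.sum_nonneg (fun e he => mul_nonneg (Nat.cast_nonneg _)
    (G.w_pos e he).le)
  unfold LearningGraph.complexity
  calc √(G.C0 * G.C1) ≤ √((∑ a ∈ Finset.range N, √(A a * B a)) *
        (∑ a ∈ Finset.range N, √(A a * B a))) := by
        apply Real.sqrt_le_sqrt
        calc G.C0 * G.C1 ≤ G.C0 * _ := mul_le_mul_of_nonneg_left hC1 hC0'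
          _ ≤ _ := mul_le_mul_of_nonneg_right hC0 hs0
    _ = _ := Real.sqrt_mul_self hs0

end PathLG

/-! ### Part 2: counting -/

section Count

lemma card_fun_one {R : ℕ} {α : Type} [Fintype α] [DecidableEq α] [Nonempty α]
    (i : Fin R) (v : α) :
    ∑ X : Fin R → α, (if X i = v then (1 : ℝ) else 0)
      = (Fintype.card α : ℝ) ^ R / Fintype.card α := by
  have ha : (Fintype.card α : ℝ) ≠ 0 := by exact_mod_cast Fintype.card_ne_zero
  have h1 : ∀ X : Fin R → α, (if X i = v then (1 : ℝ) else 0)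
      = ∏ j, (if j = i then (if X j = v then (1 : ℝ) else 0) else 1) := by
    intro X; rw [Finset.prod_ite_eq']; simp
  rw [Finset.sum_congr rfl (fun X _ => h1 X)]
  rw [← Fintype.prod_sum (fun j (x : α) => (if j = i then (if x = v then (1 : ℝ) else 0) else 1))]
  have h2 : ∀ j, (∑ x : α, (if j = i then (if x = v then (1 : ℝ) else 0) else 1))
      = (Fintype.card α : ℝ) * (if j = i then 1 / (Fintype.card α : ℝ) else 1) := by
    intro j
    split_ifs
    · simp [ha]
    · simp
  rw [Finset.prod_congr rfl (fun j _ => h2 j), Finset.prod_mul_distrib, Finset.prod_ite_eq']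
  simp [div_eq_mul_inv]

lemma card_fun_two {R : ℕ} {α : Type} [Fintype α] [DecidableEq α] [Nonempty α]
    (i l : Fin R) (hil : l ≠ i) (v : α) (B : α → Prop) [DecidablePred B] :
    ∑ X : Fin R → α, (if X i = v then (if B (X l) then (1 : ℝ) else 0) else 0)
      = (Fintype.card α : ℝ) ^ R / Fintype.card α *
        (((Finset.univ.filter B).card : ℝ) / Fintype.card α) := by
  have ha : (Fintype.card α : ℝ) ≠ 0 := by exact_mod_cast Fintype.card_ne_zero
  have h1 : ∀ X : Fin R → α, (if X i = v then (if B (X l) then (1 : ℝ) else 0) else 0)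
      = ∏ j, ((if j = i then (if X j = v then (1 : ℝ) else 0) else 1) *
          (if j = l then (if B (X j) then (1 : ℝ) else 0) else 1)) := by
    intro X; rw [Finset.prod_mul_distrib, Finset.prod_ite_eq', Finset.prod_ite_eq']; simp
    split_ifs <;> rfl
  rw [Finset.sum_congr rfl (fun X _ => h1 X)]
  rw [← Fintype.prod_sum (fun j (x : α) => ((if j = i then (if x = v then (1 : ℝ) else 0) else 1) *
          (if j = l then (if B x then (1 : ℝ) else 0) else 1)))]
  have h2 : ∀ j, (∑ x : α, ((if j = i then (if x = v then (1 : ℝ) else 0) else 1) *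
          (if j = l then (if B x then (1 : ℝ) else 0) else 1)))
      = (Fintype.card α : ℝ) * (if j = i then 1 / (Fintype.card α : ℝ) else 1) *
        (if j = l then ((Finset.univ.filter B).card : ℝ) / (Fintype.card α : ℝ) else 1) := by
    intro j
    by_cases hi : j = i
    · subst hi
      simp [hil.symm, ha]
    · by_cases hl : j = l
      · subst hl
        simp only [hi, if_false, if_true, one_mul, Finset.sum_boole, mul_one]
        field_simp
      · simp [hi, hl]
  rw [Finset.prod_congr rfl (fun j _ => h2 j), Finset.prod_mul_distrib, Finset.prod_mul_distrib,
    Finset.prod_ite_eq', Finset.prod_ite_eq']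
  simp [div_eq_mul_inv]

variable {I : Type} [Fintype I] [DecidableEq I] {R : I → ℕ} {α : I → Type}
  [∀ z, Fintype (α z)] [∀ z, DecidableEq (α z)] [∀ z, Nonempty (α z)]

/-- `card^(R-1)` as a real number -/
noncomputable def cc (R : I → ℕ) (α : I → Type) [∀ z, Fintype (α z)] (z : I) : ℝ :=
  (Fintype.card (α z) : ℝ) ^ (R z) / Fintype.card (α z)

lemma cc_pos (z : I) : 0 < cc R α z := by
  have : (0 : ℝ) < Fintype.card (α z) := by exact_mod_cast Fintype.card_pos
  unfold cc; positivity

lemma sumB (W : Finset I) (ψ : (∀ z, Fin (R z)) → ∀ z, (Fin (R z) → α z) → ℝ)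
    (hψ0 : ∀ h z X, 0 ≤ ψ h z X) (D : I → ℝ) (hD : ∀ z, 0 ≤ D z)
    (hψ : ∀ h z v, z ∉ W → ∑ X, (if X (h z) = v then ψ h z X else 0) ≤ D z * cc R α z)
    (hψW : ∀ h z X, z ∈ W → ψ h z X = 1) (hDW : ∀ z ∈ W, D z = 1)
    (τ : (∀ z, Fin (R z)) → ∀ z, α z) (hR : ∀ z, R z ≤ Fintype.card (α z)) :
    ∑ h : (∀ z, Fin (R z)), ∑ X : (∀ z, Fin (R z) → α z), ∑ h' : (∀ z, Fin (R z)),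
      ∏ z, ((if X z (h z) = τ h z then ψ h z (X z) else 0) *
        (if z ∈ W then (if X z (h' z) = τ h' z then 1 else 0) else
          (if h' z = h z then 1 else 0)))
    ≤ ∏ z, (D z * cc R α z * R z * (if z ∈ W then 2 else 1)) := by
  have hcc : ∀ z, 0 < cc R α z := cc_pos
  have ha : ∀ z, (0 : ℝ) < Fintype.card (α z) := fun z => by exact_mod_cast Fintype.card_pos
  let kk : ∀ z, Fin (R z) → Fin (R z) → ℝ := fun z a b =>
    D z * cc R α z * (if b = a then 1 else if z ∈ W then 1 / (Fintype.card (α z) : ℝ) else 0)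
  have key : ∀ h h' : (∀ z, Fin (R z)), ∀ z,
      ∑ X : Fin (R z) → α z, ((if X (h z) = τ h z then ψ h z X else 0) *
        (if z ∈ W then (if X (h' z) = τ h' z then 1 else 0) else
          (if h' z = h z then 1 else 0))) ≤ kk z (h z) (h' z) := by
    intro h h' z
    simp only [kk]
    by_cases hW : z ∈ W
    · simp only [hW, if_true, hDW z hW, one_mul]
      by_cases hh : h' z = h z
      · simp only [hh, if_true, mul_one]
        calc _ ≤ ∑ X : Fin (R z) → α z, (if X (h z) = τ h z then (1 : ℝ) else 0) := by
              refine Finset.sum_le_sum (fun X _ => ?_)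
              rw [hψW h z X hW]
              split_ifs <;> norm_num
          _ = _ := card_fun_one _ _
      · simp only [hh, if_false]
        have h3 := card_fun_two (h z) (h' z) hh (τ h z) (fun x => x = τ h' z)
        have h4 : (Finset.univ.filter (fun x => x = τ h' z)).card = 1 := by
          rw [Finset.filter_eq']; simp
        rw [h4] at h3
        rw [Finset.sum_congr rfl (g := fun X : Fin (R z) → α z =>
          (if X (h z) = τ h z then (if X (h' z) = τ h' z then (1 : ℝ) else 0) else 0))]
        · rw [h3]; simp [cc]
        · intro X _
          rw [hψW h z X hW]
          split_ifs <;> norm_num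
    · simp only [hW, if_false]
      by_cases hh : h' z = h z
      · simp only [hh, if_true, mul_one]
        exact hψ h z _ hW
      · simp [hh]
  have hkk0 : ∀ h h' : (∀ z, Fin (R z)), ∀ z, 0 ≤ ∑ X : Fin (R z) → α z,
      ((if X (h z) = τ h z then ψ h z X else 0) *
        (if z ∈ W then (if X (h' z) = τ h' z then 1 else 0) else
          (if h' z = h z then 1 else 0))) := by
    intro h h' z
    refine Finset.sum_nonneg (fun X _ => mul_nonneg ?_ ?_)
    · split_ifs
      · exact hψ0 _ _ _
      · exact le_rfl
    · split_ifs <;> norm_num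
  calc _ = ∑ h : (∀ z, Fin (R z)), ∑ h' : (∀ z, Fin (R z)), ∏ z, ∑ X : Fin (R z) → α z,
      ((if X (h z) = τ h z then ψ h z X else 0) *
        (if z ∈ W then (if X (h' z) = τ h' z then 1 else 0) else
          (if h' z = h z then 1 else 0))) := by
        refine Finset.sum_congr rfl (fun h _ => ?_)
        rw [Finset.sum_comm]
        refine Finset.sum_congr rfl (fun h' _ => ?_)
        rw [Fintype.prod_sum]
    _ ≤ ∑ h : (∀ z, Fin (R z)), ∑ h' : (∀ z, Fin (R z)), ∏ z, kk z (h z) (h' z) := by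
        refine Finset.sum_le_sum (fun h _ => Finset.sum_le_sum (fun h' _ => ?_))
        exact Finset.prod_le_prod (fun z _ => hkk0 h h' z) (fun z _ => key h h' z)
    _ = ∏ z, ∑ a : Fin (R z), ∑ b : Fin (R z), kk z a b := by
        rw [Fintype.prod_sum]
        refine Finset.sum_congr rfl (fun h _ => ?_)
        rw [Fintype.prod_sum]
    _ ≤ _ := by
        refine Finset.prod_le_prod (fun z _ => ?_) (fun z _ => ?_)
        · refine Finset.sum_nonneg (fun a _ => Finset.sum_nonneg (fun b _ => ?_))
          simp only [kk]
          refine mul_nonneg (mul_nonneg (hD z) (hcc z).le) ?_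
          have := ha z
          split_ifs <;> positivity
        · have hb : ∀ a : Fin (R z), ∑ b : Fin (R z), kk z a b
              ≤ D z * cc R α z * (if z ∈ W then 2 else 1) := by
            intro a
            simp only [kk]
            rw [← Finset.mul_sum]
            refine mul_le_mul_of_nonneg_left ?_ (mul_nonneg (hD z) (hcc z).le)
            by_cases hW : z ∈ W
            · simp only [hW, if_true]
              calc _ ≤ ∑ b : Fin (R z), ((if b = a then (1 : ℝ) else 0)
                    + 1 / (Fintype.card (α z) : ℝ)) := by
                    refine Finset.sum_le_sum (fun b _ => ?_)
                    have : 0 ≤ 1 / (Fintype.card (α z) : ℝ) := by have := ha z; positivity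
                    split_ifs <;> linarith
                _ = 1 + R z / (Fintype.card (α z) : ℝ) := by
                    rw [Finset.sum_add_distrib]
                    simp [div_eq_mul_inv]
                _ ≤ 2 := by
                    have : (R z : ℝ) / (Fintype.card (α z) : ℝ) ≤ 1 := by
                      rw [div_le_one (ha z)]; exact_mod_cast hR z
                    linarith
            · simp [hW]
          calc _ ≤ ∑ a : Fin (R z), D z * cc R α z * (if z ∈ W then 2 else 1) :=
                Finset.sum_le_sum (fun a _ => hb a)
            _ = _ := by
                rw [Finset.sum_const, nsmul_eq_mul, Finset.card_univ, Fintype.card_fin]; ring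

lemma sumA (W Z : Finset I) (ψ : (∀ z, Fin (R z)) → ∀ z, (Fin (R z) → α z) → ℝ)
    (hψ0 : ∀ h z X, 0 ≤ ψ h z X) (D : I → ℝ)
    (hψ : ∀ h z v, z ∉ W → z ∉ Z →
      ∑ X, (if X (h z) = v then ψ h z X else 0) ≤ D z * cc R α z)
    (hψW : ∀ h z X, z ∈ W → ψ h z X = 1) (hDW : ∀ z ∈ W, D z = 1)
    (hψZ : ∀ h z X, z ∈ Z → ψ h z X = 1) (hDZ : ∀ z ∈ Z, D z = 1)
    (h₀ : ∀ z, Fin (R z)) (x₀ : ∀ z, α z) :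
    ∑ h : (∀ z, Fin (R z)), ∑ X : (∀ z, Fin (R z) → α z),
      ∏ z, (ψ h z (X z) * (if z ∈ W then (if h z = h₀ z then 1 else 0) else
          if z ∈ Z then 1 else (if X z (h z) = x₀ z then 1 else 0)))
    ≤ ∏ z, (D z * cc R α z * (if z ∈ W then (Fintype.card (α z) : ℝ) else
        if z ∈ Z then R z * (Fintype.card (α z) : ℝ) else R z)) := by
  have hcc : ∀ z, 0 < cc R α z := cc_pos
  have ha : ∀ z, (0 : ℝ) < Fintype.card (α z) := fun z => by exact_mod_cast Fintype.card_pos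
  have hcca : ∀ z, cc R α z * (Fintype.card (α z) : ℝ) = (Fintype.card (α z) : ℝ) ^ (R z) := by
    intro z; unfold cc; have := ha z; field_simp
  let kk : ∀ z, Fin (R z) → ℝ := fun z a =>
    D z * cc R α z * (if z ∈ W then (if a = h₀ z then (Fintype.card (α z) : ℝ) else 0) else
      if z ∈ Z then (Fintype.card (α z) : ℝ) else 1)
  calc _ = ∑ h : (∀ z, Fin (R z)), ∏ z, ∑ X : Fin (R z) → α z,
      (ψ h z X * (if z ∈ W then (if h z = h₀ z then 1 else 0) else
          if z ∈ Z then 1 else (if X (h z) = x₀ z then 1 else 0))) := by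
        refine Finset.sum_congr rfl (fun h _ => ?_)
        rw [Fintype.prod_sum]
    _ ≤ ∑ h : (∀ z, Fin (R z)), ∏ z, kk z (h z) := by
        refine Finset.sum_le_sum (fun h _ => Finset.prod_le_prod (fun z _ => ?_) (fun z _ => ?_))
        · refine Finset.sum_nonneg (fun X _ => mul_nonneg (hψ0 _ _ _) ?_)
          split_ifs <;> norm_num
        · simp only [kk]
          by_cases hW : z ∈ W
          · simp only [hW, if_true, hDW z hW, one_mul]
            rw [Finset.sum_congr rfl (g := fun _ => (if h z = h₀ z then (1 : ℝ) else 0))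
              (fun X _ => by rw [hψW h z X hW, one_mul])]
            split_ifs
            · rw [hcca]; simp
            · simp
          · by_cases hZ : z ∈ Z
            · simp only [hW, hZ, if_true, if_false, hDZ z hZ, one_mul]
              rw [Finset.sum_congr rfl (g := fun _ => (1 : ℝ))
                (fun X _ => by rw [hψZ h z X hZ, one_mul])]
              rw [hcca]; simp
            · simp only [hW, hZ, if_false, mul_one, mul_ite, mul_zero]
              exact hψ h z (x₀ z) hW hZ
    _ = ∏ z, ∑ a : Fin (R z), kk z a := by
        rw [Fintype.prod_sum]
    _ = _ := by
        refine Finset.prod_congr rfl (fun z _ => ?_)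
        simp only [kk]
        rw [← Finset.mul_sum]
        congr 1
        by_cases hW : z ∈ W
        · simp [hW]
        · by_cases hZ : z ∈ Z <;> simp [hW, hZ]

end Count

/-! ### Part 3: one stage -/

section Stage

variable {I : Type} [Fintype I] [DecidableEq I] {R : I → ℕ} {α : I → Type}
  [∀ z, Fintype (α z)] [∀ z, DecidableEq (α z)] [∀ z, Nonempty (α z)]

/-- good seeds -/
def goodSeeds (τ : (∀ z, Fin (R z)) → ∀ z, α z) :
    Finset ((∀ z, Fin (R z)) × (∀ z, Fin (R z) → α z)) :=
  Finset.univ.filter (fun ω => ∀ z, ω.2 z (ω.1 z) = τ ω.1 z)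

lemma prod_ind (P : I → Prop) [DecidablePred P] :
    ∏ z, (if P z then (1 : ℝ) else 0) = if ∀ z, P z then 1 else 0 := by
  rw [Finset.prod_ite_zero]
  simp

lemma goodSeeds_card (τ : (∀ z, Fin (R z)) → ∀ z, α z) :
    ((goodSeeds τ).card : ℝ) = ∏ z, (cc R α z * R z) := by
  unfold goodSeeds
  rw [Finset.card_filter]
  push_cast
  rw [Fintype.sum_prod_type]
  have h1 : ∀ h : (∀ z, Fin (R z)), ∑ X : (∀ z, Fin (R z) → α z),
      (if ∀ z, X z (h z) = τ h z then (1 : ℝ) else 0) = ∏ z, cc R α z := by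
    intro h
    have h2 : ∀ X : (∀ z, Fin (R z) → α z), (if ∀ z, X z (h z) = τ h z then (1 : ℝ) else 0)
        = ∏ z, (if X z (h z) = τ h z then (1 : ℝ) else 0) := by
      intro X; rw [prod_ind]
    rw [Finset.sum_congr rfl (fun X _ => h2 X),
      ← Fintype.prod_sum (fun z (X : Fin (R z) → α z) => if X (h z) = τ h z then (1 : ℝ) else 0)]
    refine Finset.prod_congr rfl (fun z _ => ?_)
    rw [card_fun_one]; rfl
  rw [Finset.sum_congr rfl (fun h _ => h1 h), Finset.sum_const, Finset.prod_mul_distrib]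
  rw [nsmul_eq_mul, Finset.card_univ, Fintype.card_pi]
  simp
  ring

/-- single-item weight written as a product -/
lemma prod_single (g : I) (φ : I → ℝ) : ∏ z, (if z = g then φ z else 1) = φ g := by
  rw [Finset.prod_ite_eq']; simp

variable {β : Type} [DecidableEq β]

lemma stageA (W Z : Finset I) (F : (∀ z, Fin (R z)) × (∀ z, Fin (R z) → α z) → β)
    (hF : ∀ h X h' X', (∀ z, z ∉ W → h' z = h z) →
      (∀ z i, (z ∈ W ∨ z ∈ Z ∨ i ≠ h z) → X' z i = X z i) → F (h', X') = F (h, X))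
    (len : β → ℝ) (hlen0 : ∀ b, 0 ≤ len b)
    (c : ℝ) (ψ : (∀ z, Fin (R z)) → ∀ z, (Fin (R z) → α z) → ℝ)
    (hψ0 : ∀ h z X, 0 ≤ ψ h z X) (D : I → ℝ)
    (hψ : ∀ h z v, ∑ X, (if X (h z) = v then ψ h z X else 0) ≤ D z * cc R α z)
    (hψW : ∀ h z X, z ∈ W → ψ h z X = 0) (hψZ : ∀ h z X, z ∈ Z → ψ h z X = 0)
    (hD : ∀ z, 0 ≤ D z) (hc : 0 ≤ c)
    (hlen : ∀ h X, len (F (h, X)) ≤ c + ∑ g, ψ h g (X g))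
    (h₀ : ∀ z, Fin (R z)) :
    ∑ e ∈ Finset.univ.image F, len e ≤ (c + ∑ g, D g) *
      ∏ z, (cc R α z * (if z ∈ W then (Fintype.card (α z) : ℝ) else
        if z ∈ Z then R z * (Fintype.card (α z) : ℝ) else R z)) := by
  classical
  have x₀ : ∀ z, α z := fun z => Classical.arbitrary _
  let P : (∀ z, Fin (R z)) → (∀ z, Fin (R z) → α z) → I → ℝ := fun h X z =>
    (if z ∈ W then (if h z = h₀ z then 1 else 0) else
          if z ∈ Z then 1 else (if X z (h z) = x₀ z then 1 else 0))
  let canon : Finset ((∀ z, Fin (R z)) × (∀ z, Fin (R z) → α z)) :=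
    Finset.univ.filter (fun ω => ∏ z, P ω.1 ω.2 z = 1)
  have hP01 : ∀ h X, ∏ z, P h X z = 1 ∨ ∏ z, P h X z = 0 := by
    intro h X
    by_cases hz : ∃ z, P h X z = 0
    · right
      obtain ⟨z, hz⟩ := hz
      exact Finset.prod_eq_zero (Finset.mem_univ z) hz
    · left
      push Not at hz
      refine Finset.prod_eq_one (fun z _ => ?_)
      have := hz z
      simp only [P] at this ⊢
      split_ifs at this ⊢ <;> simp_all
  have hsub : Finset.univ.image F ⊆ canon.image F := by
    intro e he
    obtain ⟨⟨h, X⟩, -, rfl⟩ := Finset.mem_image.1 he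
    refine Finset.mem_image.2 ⟨(fun z => if z ∈ W then h₀ z else h z,
      fun z => if z ∈ W ∨ z ∈ Z then X z else Function.update (X z) (h z) (x₀ z)), ?_, ?_⟩
    · simp only [canon, Finset.mem_filter, Finset.mem_univ, true_and]
      refine Finset.prod_eq_one (fun z _ => ?_)
      simp only [P]
      by_cases hW : z ∈ W
      · simp [hW]
      · by_cases hZ : z ∈ Z <;> simp [hW, hZ]
    · apply hF
      · intro z hz; simp [hz]
      · intro z i hz
        by_cases hW : z ∈ W ∨ z ∈ Z
        · simp [hW]
        · have : i ≠ h z := by tauto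
          simp [hW, this]
  have hone : ∑ h, ∑ X, ∏ z, P h X z ≤ ∏ z, (cc R α z * (if z ∈ W then (Fintype.card (α z) : ℝ)
      else if z ∈ Z then R z * (Fintype.card (α z) : ℝ) else R z)) := by
    have := sumA W Z (R := R) (α := α) (fun _ _ _ => 1) (fun _ _ _ => zero_le_one) (fun _ => 1)
      (fun h z v _ _ => by rw [card_fun_one]; simp [cc]) (fun _ _ _ _ => rfl) (fun _ _ => rfl)
      (fun _ _ _ _ => rfl) (fun _ _ => rfl) h₀ x₀
    simpa only [one_mul] using this
  have hPA0 : 0 ≤ ∏ z, (cc R α z * (if z ∈ W then (Fintype.card (α z) : ℝ)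
      else if z ∈ Z then R z * (Fintype.card (α z) : ℝ) else R z)) := by
    refine Finset.prod_nonneg (fun z _ => mul_nonneg (cc_pos z).le ?_)
    split_ifs <;> positivity
  have hg : ∀ g, ∑ h, ∑ X, ψ h g (X g) * ∏ z, P h X z ≤ D g *
      ∏ z, (cc R α z * (if z ∈ W then (Fintype.card (α z) : ℝ)
      else if z ∈ Z then R z * (Fintype.card (α z) : ℝ) else R z)) := by
    intro g
    by_cases hgW : g ∈ W ∨ g ∈ Z
    · rw [Finset.sum_eq_zero]
      · exact mul_nonneg (hD g) hPA0
      · intro h _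
        refine Finset.sum_eq_zero (fun X _ => ?_)
        rcases hgW with hg | hg
        · rw [hψW h g _ hg, zero_mul]
        · rw [hψZ h g _ hg, zero_mul]
    · push Not at hgW
      have := sumA W Z (R := R) (α := α) (fun h z X => if z = g then ψ h z X else 1)
        (fun h z X => by split_ifs; exact hψ0 _ _ _; exact zero_le_one)
        (fun z => if z = g then D z else 1)
        (fun h z v _ _ => by
          by_cases hz : z = g
          · subst hz; simp only [if_true]; exact hψ h z _
          · simp only [hz, if_false]; rw [card_fun_one]; simp [cc])
        (fun h z X hz => by rw [if_neg]; rintro rfl; exact hgW.1 hz)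
        (fun z hz => by rw [if_neg]; rintro rfl; exact hgW.1 hz)
        (fun h z X hz => by rw [if_neg]; rintro rfl; exact hgW.2 hz)
        (fun z hz => by rw [if_neg]; rintro rfl; exact hgW.2 hz) h₀ x₀
      simp only [mul_assoc] at this
      rw [Finset.prod_mul_distrib, prod_single g D] at this
      refine le_trans (le_of_eq ?_) this
      refine Finset.sum_congr rfl (fun h _ => Finset.sum_congr rfl (fun X _ => ?_))
      rw [Finset.prod_mul_distrib, prod_single g (fun z => ψ h z (X z))]
  calc ∑ e ∈ Finset.univ.image F, len e ≤ ∑ e ∈ canon.image F, len e :=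
        Finset.sum_le_sum_of_subset_of_nonneg hsub (fun _ _ _ => hlen0 _)
    _ ≤ ∑ ω ∈ canon, len (F ω) := Finset.sum_image_le_of_nonneg (fun _ _ => hlen0 _)
    _ ≤ ∑ ω ∈ canon, (c + ∑ g, ψ ω.1 g (ω.2 g)) := Finset.sum_le_sum (fun ω _ => hlen ω.1 ω.2)
    _ = ∑ h, ∑ X, (c + ∑ g, ψ h g (X g)) * ∏ z, P h X z := by
        rw [Finset.sum_filter, Fintype.sum_prod_type]
        refine Finset.sum_congr rfl (fun h _ => Finset.sum_congr rfl (fun X _ => ?_))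
        rcases hP01 h X with h1 | h1 <;> simp [h1]
    _ = c * (∑ h, ∑ X, ∏ z, P h X z) + ∑ g, ∑ h, ∑ X, ψ h g (X g) * ∏ z, P h X z := by
        simp only [add_mul, Finset.sum_add_distrib, Finset.sum_mul]
        congr 1
        · simp only [Finset.mul_sum]
        · symm
          rw [Finset.sum_comm]
          refine Finset.sum_congr rfl (fun h _ => ?_)
          rw [Finset.sum_comm]
    _ ≤ _ := by
        rw [add_mul, Finset.sum_mul]
        exact add_le_add (mul_le_mul_of_nonneg_left hone hc) (Finset.sum_le_sum (fun g _ => hg g))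

lemma stageB (W Z : Finset I) (F : (∀ z, Fin (R z)) × (∀ z, Fin (R z) → α z) → β)
    (hF : ∀ h X h' X', F (h', X') = F (h, X) → (∀ z, z ∉ W → h' z = h z) ∧
      (∀ z i, (z ∈ W ∨ z ∈ Z ∨ i ≠ h z) → X' z i = X z i))
    (len : β → ℝ)
    (c : ℝ) (ψ : (∀ z, Fin (R z)) → ∀ z, (Fin (R z) → α z) → ℝ)
    (hψ0 : ∀ h z X, 0 ≤ ψ h z X) (D : I → ℝ)
    (hψ : ∀ h z v, ∑ X, (if X (h z) = v then ψ h z X else 0) ≤ D z * cc R α z)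
    (hψW : ∀ h z X, z ∈ W → ψ h z X = 0)
    (hD : ∀ z, 0 ≤ D z) (hc : 0 ≤ c)
    (hlen : ∀ h X, len (F (h, X)) ≤ c + ∑ g, ψ h g (X g))
    (hR : ∀ z, R z ≤ Fintype.card (α z)) (τ : (∀ z, Fin (R z)) → ∀ z, α z) :
    ∑ ω ∈ goodSeeds τ, len (F ω) *
        (((goodSeeds τ).filter (fun ω' => F ω' = F ω)).card : ℝ)
      ≤ (c + ∑ g, D g) * ∏ z, (cc R α z * R z * (if z ∈ W then 2 else 1)) := by
  classical
  let Q : (∀ z, Fin (R z)) → (∀ z, Fin (R z) → α z) → (∀ z, Fin (R z)) → I → ℝ := fun h X h' z =>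
    (if X z (h z) = τ h z then 1 else 0) *
        (if z ∈ W then (if X z (h' z) = τ h' z then 1 else 0) else
          (if h' z = h z then 1 else 0))
  have hQ0 : ∀ h X h' z, 0 ≤ Q h X h' z := by
    intro h X h' z
    simp only [Q]
    split_ifs <;> norm_num
  have hPB0 : 0 ≤ ∏ z, (cc R α z * R z * (if z ∈ W then (2 : ℝ) else 1)) := by
    refine Finset.prod_nonneg (fun z _ => mul_nonneg (mul_nonneg (cc_pos z).le ?_) ?_)
    · positivity
    · split_ifs <;> norm_num
  have hone : ∑ h, ∑ X, ∑ h', ∏ z, Q h X h' z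
      ≤ ∏ z, (cc R α z * R z * (if z ∈ W then 2 else 1)) := by
    have := sumB W (R := R) (α := α) (fun _ _ _ => 1) (fun _ _ _ => zero_le_one) (fun _ => 1)
      (fun _ => zero_le_one)
      (fun h z v _ => by rw [card_fun_one]; simp [cc]) (fun _ _ _ _ => rfl) (fun _ _ => rfl)
      τ hR
    simpa only [one_mul] using this
  have hg : ∀ g, ∑ h, ∑ X, ∑ h', ψ h g (X g) * ∏ z, Q h X h' z ≤ D g *
      ∏ z, (cc R α z * R z * (if z ∈ W then 2 else 1)) := by
    intro g
    by_cases hgW : g ∈ W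
    · rw [Finset.sum_eq_zero]
      · exact mul_nonneg (hD g) hPB0
      · intro h _
        refine Finset.sum_eq_zero (fun X _ => Finset.sum_eq_zero (fun h' _ => ?_))
        rw [hψW h g _ hgW, zero_mul]
    · have := sumB W (R := R) (α := α) (fun h z X => if z = g then ψ h z X else 1)
        (fun h z X => by split_ifs; exact hψ0 _ _ _; exact zero_le_one)
        (fun z => if z = g then D z else 1)
        (fun z => by split_ifs; exact hD _; exact zero_le_one)
        (fun h z v _ => by
          by_cases hz : z = g
          · subst hz; simp only [if_true]; exact hψ h z _
          · simp only [hz, if_false]; rw [card_fun_one]; simp [cc])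
        (fun h z X hz => by rw [if_neg]; rintro rfl; exact hgW hz)
        (fun z hz => by rw [if_neg]; rintro rfl; exact hgW hz) τ hR
      have e1 : ∏ z, ((if z = g then D z else 1) * cc R α z * R z * (if z ∈ W then 2 else 1))
          = D g * ∏ z, (cc R α z * R z * (if z ∈ W then 2 else 1)) := by
        rw [← prod_single g D, ← Finset.prod_mul_distrib]
        exact Finset.prod_congr rfl (fun z _ => by ring)
      rw [e1] at this
      refine le_trans (le_of_eq ?_) this
      refine Finset.sum_congr rfl (fun h _ => Finset.sum_congr rfl (fun X _ =>
        Finset.sum_congr rfl (fun h' _ => ?_)))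
      rw [← prod_single g (fun z => ψ h z (X z)), ← Finset.prod_mul_distrib]
      refine Finset.prod_congr rfl (fun z _ => ?_)
      simp only [Q]
      split_ifs <;> simp
  have hcard : ∀ h X, (h, X) ∈ goodSeeds τ →
      (((goodSeeds τ).filter (fun ω' => F ω' = F (h, X))).card : ℝ)
        ≤ ∑ h', ∏ z, Q h X h' z := by
    intro h X hX
    simp only [goodSeeds, Finset.mem_filter, Finset.mem_univ, true_and] at hX
    have hQ1 : ∀ h', (if ∀ z, (z ∈ W → X z (h' z) = τ h' z) ∧ (z ∉ W → h' z = h z)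
        then (1 : ℝ) else 0) ≤ ∏ z, Q h X h' z := by
      intro h'
      split_ifs with hc
      · refine le_of_eq (Eq.symm (Finset.prod_eq_one (fun z _ => ?_)))
        simp only [Q]
        rw [if_pos (hX z), one_mul]
        by_cases hz : z ∈ W
        · rw [if_pos hz, if_pos ((hc z).1 hz)]
        · rw [if_neg hz, if_pos ((hc z).2 hz)]
      · exact Finset.prod_nonneg (fun z _ => hQ0 _ _ _ _)
    refine le_trans ?_ (Finset.sum_le_sum (fun h' _ => hQ1 h'))
    rw [Finset.sum_boole]
    norm_cast
    refine Finset.card_le_card_of_injOn (fun ω => ω.1) ?_ ?_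
    · rintro ⟨h', X'⟩ hω
      simp only [goodSeeds, Finset.coe_filter, Finset.mem_filter, Finset.mem_univ, true_and,
        Set.mem_ofPred_eq] at hω ⊢
      obtain ⟨h1, h2⟩ := hF h X h' X' hω.2
      intro z
      refine ⟨fun hz => ?_, h1 z⟩
      rw [← h2 z (h' z) (Or.inl hz)]
      exact hω.1 z
    · rintro ⟨h', X'⟩ hω ⟨h'', X''⟩ hω' heq
      simp only at heq
      subst heq
      simp only [goodSeeds, Finset.coe_filter, Finset.mem_filter, Finset.mem_univ, true_and,
        Set.mem_ofPred_eq] at hω hω'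
      obtain ⟨h1, h2⟩ := hF h X h' X' hω.2
      obtain ⟨h3, h4⟩ := hF h X h' X'' hω'.2
      have : X' = X'' := by
        funext z i
        by_cases hz : z ∈ W ∨ z ∈ Z ∨ i ≠ h z
        · rw [h2 z i hz, h4 z i hz]
        · push Not at hz
          rw [hz.2.2, ← h1 z hz.1, hω.1 z, hω'.1 z]
      rw [this]
  calc _ ≤ ∑ ω ∈ goodSeeds τ, (c + ∑ g, ψ ω.1 g (ω.2 g)) * ∑ h', ∏ z, Q ω.1 ω.2 h' z := by
        refine Finset.sum_le_sum ?_
        rintro ⟨h, X⟩ hω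
        refine mul_le_mul (hlen h X) (hcard h X hω) (Nat.cast_nonneg _) ?_
        exact add_nonneg hc (Finset.sum_nonneg (fun g _ => hψ0 _ _ _))
    _ ≤ ∑ ω : (∀ z, Fin (R z)) × (∀ z, Fin (R z) → α z),
          (c + ∑ g, ψ ω.1 g (ω.2 g)) * ∑ h', ∏ z, Q ω.1 ω.2 h' z := by
        refine Finset.sum_le_sum_of_subset_of_nonneg (Finset.subset_univ _) (fun ω _ _ => ?_)
        exact mul_nonneg (add_nonneg hc (Finset.sum_nonneg (fun g _ => hψ0 _ _ _)))
          (Finset.sum_nonneg (fun h' _ => Finset.prod_nonneg (fun z _ => hQ0 _ _ _ _)))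
    _ = c * (∑ h, ∑ X, ∑ h', ∏ z, Q h X h' z)
          + ∑ g, ∑ h, ∑ X, ∑ h', ψ h g (X g) * ∏ z, Q h X h' z := by
        rw [Fintype.sum_prod_type]
        simp only [add_mul, Finset.sum_add_distrib, Finset.sum_mul]
        congr 1
        · simp only [Finset.mul_sum]
        · symm
          rw [Finset.sum_comm]
          refine Finset.sum_congr rfl (fun h _ => ?_)
          rw [Finset.sum_comm]
          simp only [Finset.mul_sum]
    _ ≤ _ := by
        rw [add_mul, Finset.sum_mul]
        exact add_le_add (mul_le_mul_of_nonneg_left hone hc) (Finset.sum_le_sum (fun g _ => hg g))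

end Stage

set_option linter.unusedSectionVars false
/-! ### Part 4: the hidden-position learning graph -/

section Hidden

variable {I : Type} [Fintype I] [DecidableEq I] {R : I → ℕ} {α : I → Type}
  [∀ z, Fintype (α z)] [∀ z, DecidableEq (α z)] [∀ z, Nonempty (α z)]

/-- the visible part of the lists, when the items in `W` have been loaded completely -/
def visS (W : Finset I) (h : ∀ z, Fin (R z)) (X : ∀ z, Fin (R z) → α z) :
    ∀ z, Fin (R z) → Option (α z) :=
  fun z i => if z ∈ W ∨ i ≠ h z then some (X z i) else none

/-- the items loaded before time `a` -/
def before {T : ℕ} (ord : I ≃ Fin T) (a : ℕ) : Finset I :=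
  Finset.univ.filter (fun z => (ord z).val < a)

lemma mem_before {T : ℕ} (ord : I ≃ Fin T) (a : ℕ) (z : I) :
    z ∈ before ord a ↔ (ord z).val < a := by simp [before]

lemma visS_eq (W : Finset I) {h h' : ∀ z, Fin (R z)} {X X' : ∀ z, Fin (R z) → α z}
    (heq : visS W h' X' = visS W h X) :
    (∀ z, z ∉ W → h' z = h z) ∧ (∀ z i, (z ∈ W ∨ i ≠ h z) → X' z i = X z i) := by
  have h1 : ∀ z, z ∉ W → h' z = h z := by
    intro z hz
    have := congrFun (congrFun heq z) (h' z)
    by_contra hne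
    simp [visS, hz, hne] at this
  refine ⟨h1, ?_⟩
  intro z i hi
  have h2 := congrFun (congrFun heq z) i
  have hi' : z ∈ W ∨ i ≠ h' z := by
    rcases hi with hi | hi
    · exact Or.inl hi
    · by_cases hz : z ∈ W
      · exact Or.inl hz
      · right; rw [h1 z hz]; exact hi
  simp only [visS] at h2
  rw [if_pos hi, if_pos hi'] at h2
  exact Option.some.inj h2

lemma visS_congr (W : Finset I) {h h' : ∀ z, Fin (R z)} {X X' : ∀ z, Fin (R z) → α z}
    (h1 : ∀ z, z ∉ W → h' z = h z) (h2 : ∀ z i, (z ∈ W ∨ i ≠ h z) → X' z i = X z i) :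
    visS W h' X' = visS W h X := by
  funext z i
  simp only [visS]
  by_cases hz : z ∈ W
  · simp [hz, h2 z i (Or.inl hz)]
  · rw [h1 z hz]
    by_cases hi : i ≠ h z
    · simp [hi, h2 z i (Or.inr hi)]
    · simp [hz, hi]

lemma visS_mono {W W' : Finset I} (hW : W ⊆ W') (h : ∀ z, Fin (R z))
    (X : ∀ z, Fin (R z) → α z) (z : I) (i : Fin (R z)) (x : α z)
    (hx : visS W h X z i = some x) : visS W' h X z i = some x := by
  simp only [visS] at hx ⊢
  split_ifs at hx with h1
  rw [if_pos (h1.imp_left (fun h => hW h))]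
  exact hx

/-- the path of a seed -/
def hNode {T : ℕ} (ord : I ≃ Fin T) :
    ℕ → (∀ z, Fin (R z)) × (∀ z, Fin (R z) → α z) →
      Fin (T + 2) × (∀ z, Fin (R z) → Option (α z))
  | 0, _ => (0, fun _ _ => none)
  | (a + 1), ω => (Fin.ofNat (T + 2) (a + 1), visS (before ord a) ω.1 ω.2)

variable {κ : Type} [Fintype κ] [DecidableEq κ] {f : (κ → Bool) → Bool}

set_option synthInstance.maxHeartbeats 400000 in
set_option synthInstance.maxSize 2000 in
set_option maxHeartbeats 1000000 in
theorem hiddenLG {T : ℕ} (ord : I ≃ Fin T) (hRpos : ∀ z, 0 < R z)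
    (hR : ∀ z, R z ≤ Fintype.card (α z))
    (S : (∀ z, Fin (R z) → Option (α z)) → Finset κ) (hS0 : S (fun _ _ => none) = ∅)
    (hSmono : ∀ s s' : (∀ z, Fin (R z) → Option (α z)),
      (∀ z i x, s z i = some x → s' z i = some x) → S s ⊆ S s')
    (τ : (κ → Bool) → (∀ z, Fin (R z)) → ∀ z, α z)
    (hcert : ∀ y, f y = true → ∀ (h : ∀ z, Fin (R z)) (X : ∀ z, Fin (R z) → α z),
      (∀ z, X z (h z) = τ y h z) → ∀ y' : κ → Bool,
      (∀ q ∈ S (fun z i => some (X z i)), y' q = y q) → f y' = true)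
    (D0 : ℝ) (hD0 : 0 < D0) (hSD : ∀ s, ((S s).card : ℝ) ≤ D0)
    (c : I → ℝ) (ψ : I → (∀ z, Fin (R z)) → ∀ z, (Fin (R z) → α z) → ℝ) (Dg : I → I → ℝ)
    (hc : ∀ z, 0 ≤ c z) (hψ0 : ∀ z h g X, 0 ≤ ψ z h g X) (hDg : ∀ z g, 0 ≤ Dg z g)
    (hψ : ∀ z h g v, ∑ X, (if X (h g) = v then ψ z h g X else 0) ≤ Dg z g * cc R α g)
    (hψW : ∀ z h g X, (ord g).val ≤ (ord z).val → ψ z h g X = 0)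
    (hlen : ∀ z h X, ((S (visS (before ord ((ord z).val + 1)) h X)
      \ S (visS (before ord (ord z).val) h X)).card : ℝ) ≤ c z + ∑ g, ψ z h g (X g))
    (Dt : I → ℝ) (hDt : ∀ z, 0 < Dt z) (hDt' : ∀ z, c z + ∑ g, Dg z g ≤ Dt z) :
    ∃ G : LearningGraph (Set.univ : Set (κ → Bool)) f,
      G.complexity ≤ D0 + ∑ z, Dt z * √(2 ^ T *
        ((∏ g ∈ before ord (ord z).val, ((Fintype.card (α g) : ℝ) / R g)) *
          Fintype.card (α z))) := by
  have ha : ∀ z, (0 : ℝ) < Fintype.card (α z) := fun z => by exact_mod_cast Fintype.card_pos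
  have hRp : ∀ z, (0 : ℝ) < R z := fun z => by exact_mod_cast hRpos z
  have hT : Fintype.card I = T := by rw [Fintype.card_congr ord, Fintype.card_fin]
  -- constants
  let PA : Finset I → Finset I → ℝ := fun W Z => ∏ z, (cc R α z *
    (if z ∈ W then (Fintype.card (α z) : ℝ) else
        if z ∈ Z then R z * (Fintype.card (α z) : ℝ) else R z))
  let PY : ℝ := ∏ z, (cc R α z * R z)
  have hPY : 0 < PY := Finset.prod_pos (fun z _ => mul_pos (cc_pos z) (hRp z))
  have hPA : ∀ W Z, 0 < PA W Z := by
    intro W Z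
    refine Finset.prod_pos (fun z _ => mul_pos (cc_pos z) ?_)
    have := ha z
    have := hRp z
    split_ifs <;> positivity
  have hPB : ∀ W : Finset I, ∏ z, (cc R α z * R z * (if z ∈ W then 2 else 1)) ≤ 2 ^ T * PY := by
    intro W
    rw [Finset.prod_mul_distrib, mul_comm]
    refine mul_le_mul_of_nonneg_right ?_ hPY.le
    calc _ ≤ ∏ z : I, (2 : ℝ) := Finset.prod_le_prod (fun z _ => by split_ifs <;> norm_num)
          (fun z _ => by split_ifs <;> norm_num)
      _ = _ := by rw [Finset.prod_const, Finset.card_univ, hT]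
  let A : ℕ → ℝ := fun b => match b with
    | 0 => D0 * PA ∅ ∅
    | (a + 1) => if h : a < T then Dt (ord.symm ⟨a, h⟩) *
        PA (before ord a) {ord.symm ⟨a, h⟩} else 1
  let B : ℕ → ℝ := fun b => match b with
    | 0 => D0 * 2 ^ 0 / PY
    | (a + 1) => if h : a < T then Dt (ord.symm ⟨a, h⟩) * 2 ^ T / PY else 1
  have hF1 : ∀ h X h' X', pEdge (hNode (R := R) (α := α) ord) 0 (h', X') =
      pEdge (hNode ord) 0 (h, X) ↔ ((∀ z, z ∉ (∅ : Finset I) → h' z = h z) ∧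
      (∀ z i, (z ∈ (∅ : Finset I) ∨ z ∈ (∅ : Finset I) ∨ i ≠ h z) → X' z i = X z i)) := by
    intro h X h' X'
    have hb : before ord 0 = ∅ := by ext z; simp [mem_before]
    constructor
    · intro heq
      have h1 := congrArg (fun e => e.2.2) heq
      simp only [pEdge, hNode, hb] at h1
      obtain ⟨h2, h3⟩ := visS_eq _ h1
      refine ⟨h2, fun z i hz => h3 z i (by tauto)⟩
    · rintro ⟨h2, h3⟩
      have := visS_congr (∅ : Finset I) h2 (fun z i hz => h3 z i (by tauto))
      simp only [pEdge, hNode, hb]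
      rw [this]
  have hF2 : ∀ a (hat : a < T) h X h' X',
      pEdge (hNode (R := R) (α := α) ord) (a + 1) (h', X') =
      pEdge (hNode ord) (a + 1) (h, X) ↔ ((∀ z, z ∉ before ord a → h' z = h z) ∧
      (∀ z i, (z ∈ before ord a ∨ z ∈ ({ord.symm ⟨a, hat⟩} : Finset I) ∨ i ≠ h z) →
        X' z i = X z i)) := by
    intro a hat h X h' X'
    have hb : ∀ z, z ∈ before ord (a + 1) ↔
        (z ∈ before ord a ∨ z ∈ ({ord.symm ⟨a, hat⟩} : Finset I)) := by
      intro z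
      rw [mem_before, mem_before, Finset.mem_singleton, Equiv.eq_symm_apply, Fin.ext_iff]
      simp only
      omega
    constructor
    · intro heq
      have h1 := congrArg (fun e => e.1.2) heq
      have h1' := congrArg (fun e => e.2.2) heq
      simp only [pEdge, hNode] at h1 h1'
      obtain ⟨h2, h3⟩ := visS_eq _ h1
      obtain ⟨h2', h3'⟩ := visS_eq _ h1'
      refine ⟨h2, fun z i hz => h3' z i ?_⟩
      rw [hb z]; tauto
    · rintro ⟨h2, h3⟩
      have e1 := visS_congr (before ord a) h2 (fun z i hz => h3 z i (by tauto))
      have e2 : visS (before ord (a + 1)) h' X' = visS (before ord (a + 1)) h X := by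
        refine visS_congr _ (fun z hz => h2 z ?_) (fun z i hz => h3 z i ?_)
        · rw [hb z] at hz; tauto
        · rw [hb z] at hz; tauto
      simp only [pEdge, hNode]
      rw [e1, e2]
  have hvmono : ∀ {W W' : Finset I}, W ⊆ W' → ∀ (h : ∀ z, Fin (R z)) X,
      S (visS (α := α) W h X) ⊆ S (visS W' h X) := by
    intro W W' hW h X
    exact hSmono _ _ (visS_mono hW h X)
  have hbm : ∀ a, before ord a ⊆ before ord (a + 1) := by
    intro a z hz; rw [mem_before] at hz ⊢; omega
  obtain ⟨G, hG⟩ := pathLG (f := f) (V := Fin (T + 2) × (∀ z, Fin (R z) → Option (α z)))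
    (T + 1) (Nat.succ_pos _) (fun v => v.1.val) (fun v => S v.2) (hNode ord)
    (0, fun _ _ => none) (fun ω => rfl)
    (by
      intro a haN ω
      cases a with
      | zero => rfl
      | succ a =>
        simp only [hNode, Fin.ofNat]
        exact Nat.mod_eq_of_lt (by omega))
    hS0
    (by
      intro a haN ω
      cases a with
      | zero => simp only [hNode]; rw [hS0]; exact Finset.empty_subset _
      | succ a => exact hvmono (hbm a) _ _)
    (fun y => goodSeeds (τ y))
    (by
      intro y hy
      rw [← Finset.card_pos]
      have := goodSeeds_card (τ y)
      have h2 : (0 : ℝ) < ((goodSeeds (τ y)).card : ℝ) := by rw [this]; exact hPY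
      exact_mod_cast h2)
    (by
      rintro y hy ⟨h, X⟩ hω y' hy'
      simp only [goodSeeds, Finset.mem_filter, Finset.mem_univ, true_and] at hω
      refine hcert y hy h X hω y' ?_
      have : visS (before ord T) h X = fun z i => some (X z i) := by
        funext z i
        simp only [visS]
        rw [if_pos]
        left; rw [mem_before]; exact (ord z).isLt
      simp only [hNode, this] at hy'
      exact hy')
    A B
    (by
      intro a haN
      cases a with
      | zero => exact mul_pos hD0 (hPA _ _)
      | succ a =>
        have : a < T := by omega
        simp only [A, this, dif_pos]
        exact mul_pos (hDt _) (hPA _ _))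
    (by
      intro a haN
      cases a with
      | zero => simp only [B]; positivity
      | succ a =>
        have : a < T := by omega
        simp only [B, this, dif_pos]
        have := hDt (ord.symm ⟨a, this⟩)
        positivity)
    (by
      intro a haN
      cases a with
      | zero =>
        have := stageA (R := R) (α := α) ∅ ∅ (pEdge (hNode ord) 0)
          (fun h X h' X' h1 h2 => (hF1 h X h' X').2 ⟨h1, h2⟩)
          (fun e => ((S e.2.2 \ S e.1.2).card : ℝ)) (fun _ => Nat.cast_nonneg _)
          D0 (fun _ _ _ => 0) (fun _ _ _ => le_rfl) (fun _ => 0) (fun _ _ _ => by simp)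
          (fun _ _ _ _ => rfl) (fun _ _ _ _ => rfl) (fun _ => le_rfl) hD0.le
          (fun h X => by
            simp only [Finset.sum_const_zero, add_zero]
            refine le_trans ?_ (hSD (pEdge (hNode ord) 0 (h, X)).2.2)
            exact_mod_cast Finset.card_le_card Finset.sdiff_subset)
          (fun z => ⟨0, hRpos z⟩)
        simp only [Finset.sum_const_zero, add_zero] at this
        exact this
      | succ a =>
        have hat : a < T := by omega
        have hoz : (ord (ord.symm ⟨a, hat⟩)).val = a := by simp
        have := stageA (R := R) (α := α) (before ord a) {ord.symm ⟨a, hat⟩}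
          (pEdge (hNode ord) (a + 1))
          (fun h X h' X' h1 h2 => (hF2 a hat h X h' X').2 ⟨h1, h2⟩)
          (fun e => ((S e.2.2 \ S e.1.2).card : ℝ)) (fun _ => Nat.cast_nonneg _)
          (c (ord.symm ⟨a, hat⟩)) (ψ (ord.symm ⟨a, hat⟩)) (hψ0 _) (Dg (ord.symm ⟨a, hat⟩))
          (hψ _)
          (fun h z X hz => hψW _ h z X (by rw [mem_before] at hz; rw [hoz]; omega))
          (fun h z X hz => hψW _ h z X (by rw [Finset.mem_singleton] at hz; rw [hz]))
          (hDg _) (hc _)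
          (fun h X => by
            have := hlen (ord.symm ⟨a, hat⟩) h X
            rw [hoz] at this
            exact this)
          (fun z => ⟨0, hRpos z⟩)
        simp only [A, hat, dif_pos]
        refine le_trans this ?_
        exact mul_le_mul_of_nonneg_right (hDt' _) (hPA _ _).le)
    (by
      intro y hy a haN
      have hYc : ((goodSeeds (τ y)).card : ℝ) = PY := goodSeeds_card (τ y)
      rw [hYc]
      cases a with
      | zero =>
        have := stageB (R := R) (α := α) ∅ ∅ (pEdge (hNode ord) 0)
          (fun h X h' X' h1 => (hF1 h X h' X').1 h1)
          (fun e => ((S e.2.2 \ S e.1.2).card : ℝ))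
          D0 (fun _ _ _ => 0) (fun _ _ _ => le_rfl) (fun _ => 0) (fun _ _ _ => by simp)
          (fun _ _ _ _ => rfl) (fun _ => le_rfl) hD0.le
          (fun h X => by
            simp only [Finset.sum_const_zero, add_zero]
            refine le_trans ?_ (hSD (pEdge (hNode ord) 0 (h, X)).2.2)
            exact_mod_cast Finset.card_le_card Finset.sdiff_subset)
          hR (τ y)
        simp only [Finset.sum_const_zero, add_zero, Finset.notMem_empty, if_false, mul_one] at this
        refine le_trans this (le_of_eq ?_)
        simp only [B]
        change D0 * PY = _
        field_simp
      | succ a =>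
        have hat : a < T := by omega
        have hoz : (ord (ord.symm ⟨a, hat⟩)).val = a := by simp
        have := stageB (R := R) (α := α) (before ord a) {ord.symm ⟨a, hat⟩}
          (pEdge (hNode ord) (a + 1))
          (fun h X h' X' h1 => (hF2 a hat h X h' X').1 h1)
          (fun e => ((S e.2.2 \ S e.1.2).card : ℝ))
          (c (ord.symm ⟨a, hat⟩)) (ψ (ord.symm ⟨a, hat⟩)) (hψ0 _) (Dg (ord.symm ⟨a, hat⟩))
          (hψ _)
          (fun h z X hz => hψW _ h z X (by rw [mem_before] at hz; rw [hoz]; omega))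
          (hDg _) (hc _)
          (fun h X => by
            have := hlen (ord.symm ⟨a, hat⟩) h X
            rw [hoz] at this
            exact this)
          hR (τ y)
        simp only [B, hat, dif_pos]
        refine le_trans this ?_
        calc _ ≤ Dt (ord.symm ⟨a, hat⟩) * (2 ^ T * PY) := by
              refine mul_le_mul (hDt' _) (hPB _) ?_ (hDt _).le
              refine Finset.prod_nonneg (fun z _ => mul_nonneg (mul_pos (cc_pos z) (hRp z)).le ?_)
              split_ifs <;> norm_num
          _ = _ := by field_simp)
  refine ⟨G, hG.trans ?_⟩
  rw [Finset.sum_range_succ', add_comm]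
  refine add_le_add ?_ ?_
  · have : A 0 * B 0 = D0 * D0 := by
      have h1 : PA ∅ ∅ = PY := by
        simp only [PA, PY]
        refine Finset.prod_congr rfl (fun z _ => ?_)
        simp
      simp only [A, B, h1]
      field_simp
    rw [this, Real.sqrt_mul_self hD0.le]
  · rw [← Fin.sum_univ_eq_sum_range (fun a => √(A (a + 1) * B (a + 1))) T,
      ← Equiv.sum_comp ord]
    refine Finset.sum_le_sum (fun z _ => ?_)
    have hz : (ord z).val < T := (ord z).isLt
    have hz' : ord.symm ⟨(ord z).val, hz⟩ = z := by simp
    simp only [A, B, hz, dif_pos, hz']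
    have h1 : PA (before ord (ord z).val) {z} = PY *
        ((∏ g ∈ before ord (ord z).val, ((Fintype.card (α g) : ℝ) / R g)) *
          Fintype.card (α z)) := by
      have e1 : ∏ g ∈ before ord (ord z).val, ((Fintype.card (α g) : ℝ) / R g)
          = ∏ g, if g ∈ before ord (ord z).val then ((Fintype.card (α g) : ℝ) / R g) else 1 := by
        rw [Finset.prod_ite_mem, Finset.univ_inter]
      have e2 : (Fintype.card (α z) : ℝ) = ∏ g, if g = z then (Fintype.card (α g) : ℝ) else 1 := by
        rw [prod_single z (fun g => (Fintype.card (α g) : ℝ))]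
      rw [e1, e2]
      simp only [PY, PA]
      rw [← Finset.prod_mul_distrib, ← Finset.prod_mul_distrib]
      refine Finset.prod_congr rfl (fun g _ => ?_)
      have hzn : z ∉ before ord (ord z).val := by rw [mem_before]; omega
      have := hRp g
      by_cases hg : g ∈ before ord (ord z).val
      · have : g ≠ z := by rintro rfl; exact hzn hg
        simp only [hg, if_true, this, if_false]
        field_simp
      · by_cases hgz : g = z
        · simp [hgz, hzn]; ring
        · simp [hg, hgz]
    rw [h1]
    have h2 : Dt z * (PY * ((∏ g ∈ before ord (ord z).val, ((Fintype.card (α g) : ℝ) / R g)) *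
          Fintype.card (α z))) * (Dt z * 2 ^ T / PY) = (Dt z) ^ 2 * (2 ^ T *
        ((∏ g ∈ before ord (ord z).val, ((Fintype.card (α g) : ℝ) / R g)) *
          Fintype.card (α z))) := by
      field_simp
    rw [h2, Real.sqrt_mul (by positivity), Real.sqrt_sq (hDt z).le]

end Hidden

set_option linter.unusedSectionVars false
/-! ### Part 5: the learning graph for subgraph detection -/

section Concrete

lemma exists_ord {I : Type} [Fintype I] (key : I → ℕ) :
    ∃ ord : I ≃ Fin (Fintype.card I), ∀ z z', key z < key z' → (ord z).val < (ord z').val := by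
  classical
  let e := Fintype.equivFin I
  let f : Fin (Fintype.card I) → ℕ := fun i => key (e.symm i)
  refine ⟨e.trans (Tuple.sort f).symm, ?_⟩
  intro z z' h
  by_contra hn
  have hle : (Tuple.sort f).symm (e z') ≤ (Tuple.sort f).symm (e z) := by
    rw [Fin.le_def]; exact not_lt.1 hn
  have := Tuple.monotone_sort f hle
  simp [f] at this
  omega

variable {k n : ℕ} {E : Type} [Fintype E] [DecidableEq E] (e1 e2 : E → Fin k)
  (r : Fin k → ℕ) (L : E → ℕ)

/-- the alphabets of the lists -/
def Alph (n : ℕ) {k : ℕ} {E : Type} (e1 e2 : E → Fin k) (r : Fin k → ℕ) : Fin k ⊕ E → Type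
  | Sum.inl _ => Fin n
  | Sum.inr g => Fin (r (e1 g)) × Fin (r (e2 g))

/-- the lengths of the lists -/
def Len (r : Fin k → ℕ) (L : E → ℕ) : Fin k ⊕ E → ℕ
  | Sum.inl j => r j
  | Sum.inr g => L g

instance instFintypeAlph : ∀ z, Fintype (Alph n e1 e2 r z)
  | Sum.inl _ => inferInstanceAs (Fintype (Fin n))
  | Sum.inr g => inferInstanceAs (Fintype (Fin (r (e1 g)) × Fin (r (e2 g))))

instance instDecEqAlph : ∀ z, DecidableEq (Alph n e1 e2 r z)
  | Sum.inl _ => inferInstanceAs (DecidableEq (Fin n))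
  | Sum.inr g => inferInstanceAs (DecidableEq (Fin (r (e1 g)) × Fin (r (e2 g))))

/-- partial lists -/
abbrev PLists (n : ℕ) {k : ℕ} {E : Type} (e1 e2 : E → Fin k) (r : Fin k → ℕ) (L : E → ℕ) : Type :=
  ∀ z : Fin k ⊕ E, Fin (Len r L z) → Option (Alph n e1 e2 r z)

/-- the slot `q` is seen through position `l` of list `g` -/
def Sees (st : PLists n e1 e2 r L) (g : E) (l : Fin (L g)) (q : EdgeSlot n) : Prop :=
  ∃ (i : Fin (r (e1 g))) (i' : Fin (r (e2 g))) (u u' : Fin n),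
    st (Sum.inr g) l = some ((i, i') : Fin (r (e1 g)) × Fin (r (e2 g))) ∧
    st (Sum.inl (e1 g)) i = some u ∧ st (Sum.inl (e2 g)) i' = some u' ∧
    ((q.1.1 = u ∧ q.1.2 = u') ∨ (q.1.1 = u' ∧ q.1.2 = u))

lemma sees_unique (st : PLists n e1 e2 r L) (g : E) (l : Fin (L g)) (q q' : EdgeSlot n)
    (h : Sees e1 e2 r L st g l q) (h' : Sees e1 e2 r L st g l q') : q = q' := by
  obtain ⟨i, i', u, u', h1, h2, h3, h4⟩ := h
  obtain ⟨j, j', v, v', h1', h2', h3', h4'⟩ := h'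
  rw [h1] at h1'
  have hh := Option.some.inj h1'
  have hi : i = j := congrArg Prod.fst hh
  have hi' : i' = j' := congrArg Prod.snd hh
  subst hi hi'
  rw [h2] at h2'
  rw [h3] at h3'
  have hu := Option.some.inj h2'
  have hu' := Option.some.inj h3'
  subst hu hu'
  have hq := q.2
  have hq' := q'.2
  apply Subtype.ext
  apply Prod.ext
  · rcases h4 with ⟨a, b⟩ | ⟨a, b⟩ <;> rcases h4' with ⟨a', b'⟩ | ⟨a', b'⟩ <;>
      rw [a, b] at hq <;> rw [a', b'] at hq' <;> first | (exact absurd hq (lt_asymm hq')) | (rw [a, a'])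
  · rcases h4 with ⟨a, b⟩ | ⟨a, b⟩ <;> rcases h4' with ⟨a', b'⟩ | ⟨a', b'⟩ <;>
      rw [a, b] at hq <;> rw [a', b'] at hq' <;> first | (exact absurd hq (lt_asymm hq')) | (rw [b, b'])

open Classical in
/-- the slots seen through position `l` of list `g` -/
noncomputable def slG (st : PLists n e1 e2 r L) (g : E) (l : Fin (L g)) : Finset (EdgeSlot n) :=
  Finset.univ.filter (fun q => Sees e1 e2 r L st g l q)

lemma slG_card (st : PLists n e1 e2 r L) (g : E) (l : Fin (L g)) :
    (slG e1 e2 r L st g l).card ≤ 1 := by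
  rw [Finset.card_le_one]
  intro a ha b hb
  simp only [slG, Finset.mem_filter, Finset.mem_univ, true_and] at ha hb
  exact sees_unique e1 e2 r L st g l a b ha hb

open Classical in
/-- all slots seen -/
noncomputable def SG (st : PLists n e1 e2 r L) : Finset (EdgeSlot n) :=
  Finset.univ.filter (fun q => ∃ g l, Sees e1 e2 r L st g l q)

lemma SG_card_sub (T : Finset (EdgeSlot n)) (st : PLists n e1 e2 r L)
    (P : (g : E) → Fin (L g) → Prop) [∀ g l, Decidable (P g l)]
    (hT : ∀ q ∈ T, ∃ g l, P g l ∧ Sees e1 e2 r L st g l q) :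
    (T.card : ℝ) ≤ ∑ g, ∑ l, if P g l then (1 : ℝ) else 0 := by
  classical
  have h1 : T ⊆ (Finset.univ : Finset E).biUnion (fun g => (Finset.univ.filter (P g)).biUnion
      (fun l => slG e1 e2 r L st g l)) := by
    intro q hq
    obtain ⟨g, l, hp, hs⟩ := hT q hq
    simp only [Finset.mem_biUnion, Finset.mem_univ, true_and, Finset.mem_filter, slG]
    exact ⟨g, l, hp, hs⟩
  have h2 : T.card ≤ ∑ g : E, (Finset.univ.filter (P g)).card := by
    refine (Finset.card_le_card h1).trans (Finset.card_biUnion_le.trans ?_)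
    refine Finset.sum_le_sum (fun g _ => ?_)
    refine Finset.card_biUnion_le.trans ?_
    refine (Finset.sum_le_sum (fun l _ => slG_card e1 e2 r L st g l)).trans ?_
    simp
  calc (T.card : ℝ) ≤ ((∑ g : E, (Finset.univ.filter (P g)).card : ℕ) : ℝ) := by exact_mod_cast h2
    _ = _ := by push_cast; refine Finset.sum_congr rfl (fun g _ => ?_); simp

lemma SG_card (st : PLists n e1 e2 r L) : ((SG e1 e2 r L st).card : ℝ) ≤ ∑ g, (L g : ℝ) := by
  have := SG_card_sub e1 e2 r L (SG e1 e2 r L st) st (fun _ _ => True) (by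
    intro q hq
    simp only [SG, Finset.mem_filter, Finset.mem_univ, true_and] at hq
    obtain ⟨g, l, h⟩ := hq
    exact ⟨g, l, trivial, h⟩)
  simpa using this

lemma SG_mono (s s' : PLists n e1 e2 r L) (h : ∀ z i x, s z i = some x → s' z i = some x) :
    SG e1 e2 r L s ⊆ SG e1 e2 r L s' := by
  intro q hq
  simp only [SG, Finset.mem_filter, Finset.mem_univ, true_and] at hq ⊢
  obtain ⟨g, l, i, i', u, u', h1, h2, h3, h4⟩ := hq
  exact ⟨g, l, i, i', u, u', h _ _ _ h1, h _ _ _ h2, h _ _ _ h3, h4⟩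

/-- the hidden position of a vertex list -/
def posV (h : ∀ z, Fin (Len r L z)) (j : Fin k) : Fin (r j) := h (Sum.inl j)

/-- the hidden position of an edge list -/
def posE (h : ∀ z, Fin (Len r L z)) (g : E) : Fin (L g) := h (Sum.inr g)

/-- the relevant positions of list `g` when loading vertex `j` -/
def Hits (j : Fin k) (g : E) (p : Fin (r (e1 g))) (p' : Fin (r (e2 g)))
    (x : Fin (r (e1 g)) × Fin (r (e2 g))) : Prop :=
  (e1 g = j ∧ x.1 = p) ∨ (e2 g = j ∧ x.2 = p')

instance instDecHits (j : Fin k) (g : E) (p : Fin (r (e1 g))) (p' : Fin (r (e2 g)))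
    (x : Fin (r (e1 g)) × Fin (r (e2 g))) : Decidable (Hits e1 e2 r j g p p' x) := by
  unfold Hits
  infer_instance

/-- number of hits -/
def numHits (j : Fin k) (g : E) (p : Fin (r (e1 g))) (p' : Fin (r (e2 g))) (i : Fin (L g))
    (X : Fin (L g) → Fin (r (e1 g)) × Fin (r (e2 g))) : ℝ :=
  ∑ l : Fin (L g), if (l ≠ i ∧ Hits e1 e2 r j g p p' (X l)) then (1 : ℝ) else 0

/-- the length function -/
def psiG (z : Fin k ⊕ E) (h : ∀ z, Fin (Len r L z)) (z' : Fin k ⊕ E) :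
    (Fin (Len r L z') → Alph n e1 e2 r z') → ℝ :=
  match z, z' with
  | Sum.inl j, Sum.inr g => fun X => numHits e1 e2 r L j g (posV r L h (e1 g)) (posV r L h (e2 g))
      (posE r L h g) X
  | _, _ => fun _ => 0

/-- expected number of hits -/
noncomputable def DgG (z z' : Fin k ⊕ E) : ℝ :=
  match z, z' with
  | Sum.inl j, Sum.inr g => if e1 g = j ∨ e2 g = j then (L g : ℝ) / r j else 0
  | _, _ => 0

lemma hits_card (hr : ∀ j, 0 < r j) (hne : ∀ g, e1 g ≠ e2 g) (j : Fin k) (g : E)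
    (p : Fin (r (e1 g))) (p' : Fin (r (e2 g))) :
    ((Finset.univ.filter (Hits e1 e2 r j g p p')).card : ℝ) /
      Fintype.card (Fin (r (e1 g)) × Fin (r (e2 g))) ≤
      if e1 g = j ∨ e2 g = j then 1 / (r j : ℝ) else 0 := by
  have hp1 : (0 : ℝ) < r (e1 g) := by exact_mod_cast hr _
  have hp2 : (0 : ℝ) < r (e2 g) := by exact_mod_cast hr _
  rw [Fintype.card_prod, Fintype.card_fin, Fintype.card_fin]
  push_cast
  by_cases h1 : e1 g = j
  · have h2 : e2 g ≠ j := fun h2 => hne g (h1.trans h2.symm)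
    have : Finset.univ.filter (Hits e1 e2 r j g p p') ⊆
        ({p} : Finset (Fin (r (e1 g)))) ×ˢ Finset.univ := by
      intro x hx
      simp only [Finset.mem_filter, Finset.mem_univ, true_and, Hits, h2, false_and, or_false] at hx
      simp only [Finset.mem_product, Finset.mem_singleton, Finset.mem_univ, and_true]
      exact hx.2
    have hc := Finset.card_le_card this
    rw [Finset.card_product, Finset.card_singleton, Finset.card_univ, Fintype.card_fin, one_mul] at hc
    have hc' : ((Finset.univ.filter (Hits e1 e2 r j g p p')).card : ℝ) ≤ r (e2 g) := by
      exact_mod_cast hc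
    have hj : r j = r (e1 g) := by rw [h1]
    rw [if_pos (Or.inl h1), hj, div_le_div_iff₀ (by positivity) hp1]
    nlinarith
  · by_cases h2 : e2 g = j
    · have : Finset.univ.filter (Hits e1 e2 r j g p p') ⊆
          Finset.univ ×ˢ ({p'} : Finset (Fin (r (e2 g)))) := by
        intro x hx
        simp only [Finset.mem_filter, Finset.mem_univ, true_and, Hits, h1, false_and, false_or] at hx
        simp only [Finset.mem_product, Finset.mem_singleton, Finset.mem_univ, true_and]
        exact hx.2
      have hc := Finset.card_le_card this
      rw [Finset.card_product, Finset.card_singleton, Finset.card_univ, Fintype.card_fin, mul_one] at hc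
      have hc' : ((Finset.univ.filter (Hits e1 e2 r j g p p')).card : ℝ) ≤ r (e1 g) := by
        exact_mod_cast hc
      have hj : r j = r (e2 g) := by rw [h2]
      rw [if_pos (Or.inr h2), hj, div_le_div_iff₀ (by positivity) hp2]
      nlinarith
    · have : Finset.univ.filter (Hits e1 e2 r j g p p') = ∅ := by
        ext x; simp [Hits, h1, h2]
      rw [this]
      simp [h1, h2]

lemma numHits_avg (hr : ∀ j, 0 < r j) (hne : ∀ g, e1 g ≠ e2 g) (j : Fin k) (g : E)
    (p : Fin (r (e1 g))) (p' : Fin (r (e2 g))) (i : Fin (L g))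
    (v : Fin (r (e1 g)) × Fin (r (e2 g))) :
    ∑ X : Fin (L g) → Fin (r (e1 g)) × Fin (r (e2 g)),
      (if X i = v then numHits e1 e2 r L j g p p' i X else 0) ≤
      (if e1 g = j ∨ e2 g = j then (L g : ℝ) / r j else 0) *
      ((Fintype.card (Fin (r (e1 g)) × Fin (r (e2 g))) : ℝ) ^ (L g) /
        Fintype.card (Fin (r (e1 g)) × Fin (r (e2 g)))) := by
  have : Nonempty (Fin (r (e1 g)) × Fin (r (e2 g))) := ⟨(⟨0, hr _⟩, ⟨0, hr _⟩)⟩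
  have h1 : ∀ X : Fin (L g) → Fin (r (e1 g)) × Fin (r (e2 g)),
      (if X i = v then numHits e1 e2 r L j g p p' i X else 0)
      = ∑ l : Fin (L g), if X i = v then
      (if (l ≠ i ∧ Hits e1 e2 r j g p p' (X l)) then (1 : ℝ) else 0) else 0 := by
    intro X
    unfold numHits
    split_ifs <;> simp
  rw [Finset.sum_congr rfl (fun X _ => h1 X), Finset.sum_comm]
  have hcc : (0 : ℝ) ≤ ((Fintype.card (Fin (r (e1 g)) × Fin (r (e2 g))) : ℝ) ^ (L g) /
      Fintype.card (Fin (r (e1 g)) × Fin (r (e2 g)))) := by positivity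
  have h2 : ∀ l : Fin (L g), ∑ X : Fin (L g) → Fin (r (e1 g)) × Fin (r (e2 g)),
      (if X i = v then
      (if (l ≠ i ∧ Hits e1 e2 r j g p p' (X l)) then (1 : ℝ) else 0) else 0)
      ≤ ((Fintype.card (Fin (r (e1 g)) × Fin (r (e2 g))) : ℝ) ^ (L g) /
      Fintype.card (Fin (r (e1 g)) × Fin (r (e2 g)))) *
        (if e1 g = j ∨ e2 g = j then 1 / (r j : ℝ) else 0) := by
    intro l
    by_cases hl : l = i
    · have : ∀ X : Fin (L g) → Fin (r (e1 g)) × Fin (r (e2 g)),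
        (if X i = v then
      (if (l ≠ i ∧ Hits e1 e2 r j g p p' (X l)) then (1 : ℝ) else 0) else 0) = 0 := by
        intro X; simp [hl]
      rw [Finset.sum_congr rfl (fun X _ => this X), Finset.sum_const_zero]
      refine mul_nonneg hcc ?_
      split_ifs <;> positivity
    · have e := card_fun_two i l hl v (Hits e1 e2 r j g p p')
      have : ∀ X : Fin (L g) → Fin (r (e1 g)) × Fin (r (e2 g)),
        (if X i = v then
      (if (l ≠ i ∧ Hits e1 e2 r j g p p' (X l)) then (1 : ℝ) else 0) else 0)
        = (if X i = v then (if Hits e1 e2 r j g p p' (X l) then (1 : ℝ) else 0) else 0) := by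
        intro X
        simp [hl]
      rw [Finset.sum_congr rfl (fun X _ => this X), e]
      exact mul_le_mul_of_nonneg_left (hits_card e1 e2 r hr hne j g p p') hcc
  refine (Finset.sum_le_sum (fun l _ => h2 l)).trans (le_of_eq ?_)
  rw [Finset.sum_const, Finset.card_univ, Fintype.card_fin, nsmul_eq_mul]
  split_ifs <;> ring

lemma psiG_avg (hr : ∀ j, 0 < r j) (hne : ∀ g, e1 g ≠ e2 g)
    (z : Fin k ⊕ E) (h : ∀ z, Fin (Len r L z)) (z' : Fin k ⊕ E) (v : Alph n e1 e2 r z') :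
    ∑ X : Fin (Len r L z') → Alph n e1 e2 r z',
      (if X (h z') = v then psiG e1 e2 r L z h z' X else 0) ≤
      DgG e1 e2 r L z z' * cc (Len r L) (Alph n e1 e2 r) z' := by
  match z, z', v with
  | Sum.inl j, Sum.inl j', v => simp [psiG, DgG]
  | Sum.inr g, Sum.inl j', v => simp [psiG, DgG]
  | Sum.inr g, Sum.inr g', v => simp [psiG, DgG]
  | Sum.inl j, Sum.inr g, v => exact numHits_avg e1 e2 r L hr hne j g _ _ (posE r L h g) v

end Concrete

/-! ### Part 6: instantiation -/
set_option linter.unusedSectionVars false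

section Inst

variable {k n : ℕ} {E : Type} [Fintype E] [DecidableEq E] (e1 e2 : E → Fin k)
  (r : Fin k → ℕ) (L : E → ℕ)

lemma vis_diff {I : Type} [DecidableEq I] {R : I → ℕ} {α : I → Type} {W W' : Finset I} (z : I)
    (hW : ∀ g, g ∈ W' ↔ g ∈ W ∨ g = z) (h : ∀ z, Fin (R z)) (X : ∀ z, Fin (R z) → α z)
    (g : I) (i : Fin (R g)) (x : α g) (h1 : visS W' h X g i = some x)
    (h2 : visS W h X g i ≠ some x) : g = z ∧ i = h g := by
  simp only [visS] at h1 h2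
  split_ifs at h1 with h3
  rw [hW] at h3
  by_cases h4 : g ∈ W ∨ i ≠ h g
  · rw [if_pos h4] at h2; exact absurd h1 h2
  · push Not at h4
    refine ⟨?_, h4.2⟩
    rcases h3 with (h3 | h3) | h3
    · exact absurd h3 h4.1
    · exact h3
    · exact absurd h4.2 h3

lemma vis_val {I : Type} [DecidableEq I] {R : I → ℕ} {α : I → Type} {W : Finset I}
    (h : ∀ z, Fin (R z)) (X : ∀ z, Fin (R z) → α z)
    (g : I) (i : Fin (R g)) (x : α g) (h1 : visS W h X g i = some x) :
    (g ∈ W ∨ i ≠ h g) ∧ X g i = x := by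
  simp only [visS] at h1
  split_ifs at h1 with h3
  exact ⟨h3, Option.some.inj h1⟩

lemma SG_len {T : ℕ} (ord : (Fin k ⊕ E) ≃ Fin T)
    (ho1 : ∀ g, (ord (Sum.inl (e1 g))).val < (ord (Sum.inr g)).val)
    (ho2 : ∀ g, (ord (Sum.inl (e2 g))).val < (ord (Sum.inr g)).val)
    (z : Fin k ⊕ E) (h : ∀ z, Fin (Len r L z)) (X : ∀ z, Fin (Len r L z) → Alph n e1 e2 r z) :
    ((SG e1 e2 r L (visS (before ord ((ord z).val + 1)) h X)
      \ SG e1 e2 r L (visS (before ord (ord z).val) h X)).card : ℝ) ≤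
      (Sum.elim (fun _ => 0) (fun _ => 1) z : ℝ) + ∑ g, psiG e1 e2 r L z h g (X g) := by
  have hW : ∀ g, g ∈ before ord ((ord z).val + 1) ↔ g ∈ before ord (ord z).val ∨ g = z := by
    intro g
    rw [mem_before, mem_before, ← ord.injective.eq_iff, Fin.ext_iff]
    omega
  have key : ∀ q ∈ SG e1 e2 r L (visS (before ord ((ord z).val + 1)) h X)
      \ SG e1 e2 r L (visS (before ord (ord z).val) h X), ∃ (g : E) (l : Fin (L g)),
      Sees e1 e2 r L (visS (before ord ((ord z).val + 1)) h X) g l q ∧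
      ((Sum.inr g = z ∧ l = h (Sum.inr g)) ∨
        ∃ j, z = Sum.inl j ∧ l ≠ h (Sum.inr g) ∧ 
          Hits e1 e2 r j g (posV r L h (e1 g)) (posV r L h (e2 g)) (X (Sum.inr g) l)) := by
    intro q hq
    rw [Finset.mem_sdiff] at hq
    obtain ⟨hq1, hq2⟩ := hq
    simp only [SG, Finset.mem_filter, Finset.mem_univ, true_and] at hq1 hq2
    obtain ⟨g, l, hs⟩ := hq1
    refine ⟨g, l, hs, ?_⟩
    push Not at hq2
    have hq3 := hq2 g l
    obtain ⟨i, i', u, u', h1, h2, h3, h4⟩ := hs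
    by_cases c1 : visS (before ord (ord z).val) h X (Sum.inr g) l =
        some ((i, i') : Fin (r (e1 g)) × Fin (r (e2 g)))
    · right
      have hl := vis_val h X (Sum.inr g) l _ h1
      by_cases c2 : visS (before ord (ord z).val) h X (Sum.inl (e1 g)) i = some u
      · have c3 : visS (before ord (ord z).val) h X (Sum.inl (e2 g)) i' ≠ some u' := by
          intro c3
          exact hq3 ⟨i, i', u, u', c1, c2, c3, h4⟩
        obtain ⟨hz, hi⟩ := vis_diff z hW h X _ _ _ h3 c3
        refine ⟨e2 g, hz.symm, ?_, ?_⟩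
        · rcases hl.1 with h5 | h5
          · exfalso
            rw [mem_before, ← hz] at h5
            have := ho2 g
            omega
          · exact h5
        · right
          refine ⟨rfl, ?_⟩
          rw [hl.2]
          exact hi
      · obtain ⟨hz, hi⟩ := vis_diff z hW h X _ _ _ h2 c2
        refine ⟨e1 g, hz.symm, ?_, ?_⟩
        · rcases hl.1 with h5 | h5
          · exfalso
            rw [mem_before, ← hz] at h5
            have := ho1 g
            omega
          · exact h5
        · left
          refine ⟨rfl, ?_⟩
          rw [hl.2]
          exact hi
    · left
      exact vis_diff z hW h X _ _ _ h1 c1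
  match z with
  | Sum.inr g₀ =>
    have hψ : ∑ g, psiG e1 e2 r L (Sum.inr g₀) h g (X g) = 0 := by
      refine Finset.sum_eq_zero (fun g _ => ?_)
      cases g <;> rfl
    rw [hψ, add_zero]
    simp only [Sum.elim_inr]
    norm_cast
    rw [Finset.card_le_one]
    intro a ha b hb
    obtain ⟨g, l, hs, hc⟩ := key a ha
    obtain ⟨g', l', hs', hc'⟩ := key b hb
    rcases hc with ⟨hc1, hc2⟩ | ⟨j, hj, _⟩
    · rcases hc' with ⟨hc1', hc2'⟩ | ⟨j, hj, _⟩
      · have e : g = g' := Sum.inr.inj (hc1.trans hc1'.symm)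
        subst e
        have e : l = l' := hc2.trans hc2'.symm
        subst e
        exact sees_unique e1 e2 r L _ g l a b hs hs'
      · cases hj
    · cases hj
  | Sum.inl j =>
    have hs := SG_card_sub e1 e2 r L _ _ (fun (g : E) (l : Fin (L g)) =>
      (l ≠ posE r L h g ∧
        Hits e1 e2 r j g (posV r L h (e1 g)) (posV r L h (e2 g)) (show Fin (r (e1 g)) × Fin (r (e2 g)) from X (Sum.inr g) l)))
      (fun q hq => by
        obtain ⟨g, l, hs, hc⟩ := key q hq
        refine ⟨g, l, ?_, hs⟩
        rcases hc with ⟨hc, _⟩ | ⟨j', hj, hc1, hc2⟩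
        · cases hc
        · have := Sum.inl.inj hj
          subst this
          exact ⟨hc1, hc2⟩)
    refine hs.trans (le_of_eq ?_)
    rw [Fintype.sum_sum_type]
    have h0 : ∀ j', psiG e1 e2 r L (Sum.inl j) h (Sum.inl j') (X (Sum.inl j')) = 0 := fun _ => rfl
    rw [Finset.sum_congr rfl (fun j' _ => h0 j')]
    simp only [Sum.elim_inl, Finset.sum_const_zero, zero_add]
    rfl

open Classical in
/-- the target -/
noncomputable def tauG (H : SimpleGraph (Fin k)) (hn : 0 < n) (y : EdgeSlot n → Bool)
    (h : ∀ z, Fin (Len r L z)) : ∀ z, Alph n e1 e2 r z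
  | Sum.inl j => if hy : HasHCopy H y then hy.choose j else (⟨0, hn⟩ : Fin n)
  | Sum.inr g => ((h (Sum.inl (e1 g)) : Fin (r (e1 g))), (h (Sum.inl (e2 g)) : Fin (r (e2 g))))

lemma subgraphFn_iff (H : SimpleGraph (Fin k)) (y : EdgeSlot n → Bool) :
    subgraphFn H n y = true ↔ HasHCopy H y := by
  simp [subgraphFn]

lemma certG (H : SimpleGraph (Fin k)) (hn : 0 < n)
    (hE : ∀ i j, H.Adj i j → ∃ g, (e1 g = i ∧ e2 g = j) ∨ (e1 g = j ∧ e2 g = i))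
    (y : EdgeSlot n → Bool) (hy : subgraphFn H n y = true)
    (h : ∀ z, Fin (Len r L z)) (X : ∀ z, Fin (Len r L z) → Alph n e1 e2 r z)
    (hX : ∀ z, X z (h z) = tauG e1 e2 r L H hn y h z) (y' : EdgeSlot n → Bool)
    (hy' : ∀ q ∈ SG e1 e2 r L (fun z i => some (X z i)), y' q = y q) :
    subgraphFn H n y' = true := by
  rw [subgraphFn_iff] at hy ⊢
  have hφ := hy.choose_spec
  refine ⟨hy.choose, ?_⟩
  intro i j hij q hq
  rw [← hφ i j hij q hq]
  apply hy'
  simp only [SG, Finset.mem_filter, Finset.mem_univ, true_and]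
  obtain ⟨g, hg⟩ := hE i j hij
  have t1 : ∀ j, X (Sum.inl j) (h (Sum.inl j)) = hy.choose j := by
    intro j
    rw [hX]
    exact dif_pos hy
  refine ⟨g, h (Sum.inr g), h (Sum.inl (e1 g)), h (Sum.inl (e2 g)), hy.choose (e1 g),
    hy.choose (e2 g), ?_, ?_, ?_, ?_⟩
  · exact congrArg some (hX (Sum.inr g))
  · exact congrArg some (t1 _)
  · exact congrArg some (t1 _)
  · rcases hg with ⟨a, b⟩ | ⟨a, b⟩ <;> rw [a, b] <;> tauto

/-- ratios of alphabet size to list length -/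
noncomputable def ratG (n : ℕ) (z : Fin k ⊕ E) : ℝ :=
  Sum.elim (fun j => (n : ℝ) / r j) (fun g => ((r (e1 g) : ℝ) * r (e2 g)) / L g) z

theorem graphLG (H : SimpleGraph (Fin k)) (hn : 0 < n)
    (hE : ∀ i j, H.Adj i j → ∃ g, (e1 g = i ∧ e2 g = j) ∨ (e1 g = j ∧ e2 g = i))
    (hne : ∀ g, e1 g ≠ e2 g)
    (hr : ∀ j, 0 < r j) (hrn : ∀ j, r j ≤ n) (hL : ∀ g, 0 < L g)
    (hLr : ∀ g, L g ≤ r (e1 g) * r (e2 g))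
    (key : Fin k ⊕ E → ℕ) (hk1 : ∀ g, key (Sum.inl (e1 g)) < key (Sum.inr g))
    (hk2 : ∀ g, key (Sum.inl (e2 g)) < key (Sum.inr g))
    (D0 : ℝ) (hD0 : 0 < D0) (hD0' : ∑ g, (L g : ℝ) ≤ D0)
    (Dv : Fin k → ℝ) (hDv : ∀ j, 0 < Dv j)
    (hDv' : ∀ j, ∑ g, (if e1 g = j ∨ e2 g = j then (L g : ℝ) / r j else 0) ≤ Dv j) :
    ∃ G : LearningGraph (Set.univ : Set (EdgeSlot n → Bool)) (subgraphFn H n),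
      G.complexity ≤ D0 + (∑ j, Dv j * √(2 ^ (k + Fintype.card E) *
        ((∏ g ∈ (Finset.univ.filter (fun g => key g ≤ key (Sum.inl j))).erase (Sum.inl j),
          ratG e1 e2 r L n g) * n)) +
        ∑ e, √(2 ^ (k + Fintype.card E) *
        ((∏ g ∈ (Finset.univ.filter (fun g => key g ≤ key (Sum.inr e))).erase (Sum.inr e),
          ratG e1 e2 r L n g) * (r (e1 e) * r (e2 e))))) := by
  obtain ⟨ord, hord⟩ : ∃ ord : (Fin k ⊕ E) ≃ Fin (k + Fintype.card E),
      ∀ z z', key z < key z' → (ord z).val < (ord z').val := by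
    have hT : Fintype.card (Fin k ⊕ E) = k + Fintype.card E := by simp
    rw [← hT]
    exact exists_ord key
  have : ∀ z, Nonempty (Alph n e1 e2 r z) := by
    intro z
    match z with
    | Sum.inl j => exact ⟨(⟨0, hn⟩ : Fin n)⟩
    | Sum.inr g => exact ⟨((⟨0, hr _⟩ : Fin (r (e1 g))), (⟨0, hr _⟩ : Fin (r (e2 g))))⟩
  have hcard1 : ∀ j, Fintype.card (Alph n e1 e2 r (Sum.inl j)) = n := fun j => Fintype.card_fin n
  have hcard2 : ∀ g, Fintype.card (Alph n e1 e2 r (Sum.inr g)) = r (e1 g) * r (e2 g) := by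
    intro g
    have : Fintype.card (Fin (r (e1 g)) × Fin (r (e2 g))) = r (e1 g) * r (e2 g) := by simp
    exact this
  obtain ⟨G, hG⟩ := hiddenLG (f := subgraphFn H n) (R := Len r L) (α := Alph n e1 e2 r) ord
    (fun z => by cases z with | inl j => exact hr j | inr g => exact hL g)
    (fun z => by
      cases z with
      | inl j => rw [hcard1]; exact hrn j
      | inr g => rw [hcard2]; exact hLr g)
    (SG e1 e2 r L)
    (by
      ext q
      simp [SG, Sees])
    (SG_mono e1 e2 r L) (tauG e1 e2 r L H hn)
    (certG e1 e2 r L H hn hE) D0 hD0 (fun s => (SG_card e1 e2 r L s).trans hD0')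
    (fun z => Sum.elim (fun _ => 0) (fun _ => 1) z) (psiG e1 e2 r L) (DgG e1 e2 r L)
    (fun z => by cases z <;> simp)
    (fun z h g X => by
      match z, g with
      | Sum.inl j, Sum.inr g =>
        change 0 ≤ numHits e1 e2 r L j g _ _ _ _
        refine Finset.sum_nonneg (fun l _ => ?_)
        split_ifs <;> norm_num
      | Sum.inl j, Sum.inl g => exact le_rfl
      | Sum.inr j, Sum.inl g => exact le_rfl
      | Sum.inr j, Sum.inr g => exact le_rfl)
    (fun z g => by
      match z, g with
      | Sum.inl j, Sum.inr g =>
        simp only [DgG]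
        split_ifs <;> positivity
      | Sum.inl j, Sum.inl g => exact le_rfl
      | Sum.inr j, Sum.inl g => exact le_rfl
      | Sum.inr j, Sum.inr g => exact le_rfl)
    (psiG_avg e1 e2 r L hr hne)
    (fun z h g X hle => by
      match z, g with
      | Sum.inl j, Sum.inr g =>
        change numHits e1 e2 r L j g _ _ _ _ = 0
        refine Finset.sum_eq_zero (fun l _ => ?_)
        rw [if_neg]
        rintro ⟨_, ⟨h1, _⟩ | ⟨h1, _⟩⟩
        · have := hord _ _ (hk1 g)
          rw [h1] at this
          omega
        · have := hord _ _ (hk2 g)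
          rw [h1] at this
          omega
      | Sum.inl j, Sum.inl g => rfl
      | Sum.inr j, Sum.inl g => rfl
      | Sum.inr j, Sum.inr g => rfl)
    (SG_len e1 e2 r L ord (fun g => hord _ _ (hk1 g)) (fun g => hord _ _ (hk2 g)))
    (fun z => Sum.elim Dv (fun _ => 1) z)
    (fun z => by
      cases z with
      | inl j => exact hDv j
      | inr g => simp)
    (fun z => by
      cases z with
      | inl j =>
        rw [Fintype.sum_sum_type]
        simpa [DgG] using hDv' j
      | inr g =>
        rw [Fintype.sum_sum_type]
        simp [DgG])
  refine ⟨G, hG.trans ?_⟩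
  rw [Fintype.sum_sum_type]
  have hrat : ∀ z, (Fintype.card (Alph n e1 e2 r z) : ℝ) / Len r L z = ratG e1 e2 r L n z := by
    intro z
    cases z with
    | inl j => rw [hcard1]; rfl
    | inr g => rw [hcard2]; push_cast; rfl
  have hrat1 : ∀ z, 1 ≤ ratG e1 e2 r L n z := by
    intro z
    cases z with
    | inl j =>
      simp only [ratG, Sum.elim_inl]
      rw [le_div_iff₀ (by exact_mod_cast hr j), one_mul]
      exact_mod_cast hrn j
    | inr g =>
      simp only [ratG, Sum.elim_inr]
      rw [le_div_iff₀ (by exact_mod_cast hL g), one_mul]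
      exact_mod_cast hLr g
  have hprod : ∀ z, ∏ g ∈ before ord (ord z).val,
      ((Fintype.card (Alph n e1 e2 r g) : ℝ) / Len r L g) ≤
      ∏ g ∈ (Finset.univ.filter (fun g => key g ≤ key z)).erase z, ratG e1 e2 r L n g := by
    intro z
    rw [Finset.prod_congr rfl (fun g _ => hrat g)]
    refine Finset.prod_le_prod_of_subset_of_one_le ?_ (fun g _ => zero_le_one.trans (hrat1 g))
      (fun g _ _ => hrat1 g)
    intro g hg
    rw [mem_before] at hg
    rw [Finset.mem_erase, Finset.mem_filter]
    refine ⟨?_, Finset.mem_univ _, ?_⟩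
    · rintro rfl; omega
    · by_contra hc
      have := hord _ _ (not_le.1 hc)
      omega
  refine add_le_add le_rfl (add_le_add ?_ ?_)
  · refine Finset.sum_le_sum (fun j _ => ?_)
    simp only [Sum.elim_inl]
    refine mul_le_mul_of_nonneg_left (Real.sqrt_le_sqrt ?_) (hDv j).le
    refine mul_le_mul_of_nonneg_left ?_ (by positivity)
    rw [hcard1]
    exact mul_le_mul_of_nonneg_right (hprod _) (by positivity)
  · refine Finset.sum_le_sum (fun j _ => ?_)
    simp only [Sum.elim_inr, one_mul]
    refine Real.sqrt_le_sqrt ?_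
    refine mul_le_mul_of_nonneg_left ?_ (by positivity)
    rw [hcard2]
    push_cast
    exact mul_le_mul_of_nonneg_right (hprod _) (by positivity)

end Inst

/-! ### Part 7: power parameters -/
set_option linter.unusedSectionVars false

section Param

variable {k : ℕ} {E : Type} [Fintype E] [DecidableEq E] (e1 e2 : E → Fin k)

/-- total exponent of the items with key at most `c` -/
noncomputable def XS (a : Fin k → ℝ) (b : E → ℝ) (key : Fin k ⊕ E → ℕ) (c : ℕ) : ℝ :=
  ∑ j, (if key (Sum.inl j) ≤ c then 1 - a j else 0) +
    ∑ g, (if key (Sum.inr g) ≤ c then a (e1 g) + a (e2 g) - b g else 0)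

lemma ceil_le_two {x : ℝ} (hx : 1 ≤ x) : ((⌈x⌉₊ : ℕ) : ℝ) ≤ 2 * x := by
  have := Nat.ceil_lt_add_one (show 0 ≤ x by linarith)
  linarith

lemma sqrt_le_of_one_le {x : ℝ} (hx : 1 ≤ x) : √x ≤ x := by
  rw [Real.sqrt_le_left (by linarith)]
  nlinarith

lemma sqrt_rpow_two {x : ℝ} (hx : 0 ≤ x) (s : ℝ) : √(x ^ s) = x ^ (s / 2) := by
  rw [Real.sqrt_eq_rpow, ← Real.rpow_mul hx]
  congr 1
  ring

theorem paramLG (H : SimpleGraph (Fin k))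
    (hE : ∀ i j, H.Adj i j → ∃ g, (e1 g = i ∧ e2 g = j) ∨ (e1 g = j ∧ e2 g = i))
    (hne : ∀ g, e1 g ≠ e2 g) (hinc : ∀ j, ∃ g, e1 g = j ∨ e2 g = j)
    (key : Fin k ⊕ E → ℕ) (hk1 : ∀ g, key (Sum.inl (e1 g)) < key (Sum.inr g))
    (hk2 : ∀ g, key (Sum.inl (e2 g)) < key (Sum.inr g))
    (a : Fin k → ℝ) (b : E → ℝ) (ha0 : ∀ j, 0 ≤ a j) (ha1 : ∀ j, a j ≤ 1)
    (hb0 : ∀ g, 0 ≤ b g) (hb1 : ∀ g, b g ≤ a (e1 g) + a (e2 g)) (β : ℝ)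
    (h0 : ∀ g, b g ≤ β)
    (h1 : ∀ j g, (e1 g = j ∨ e2 g = j) →
      b g + (XS e1 e2 a b key (key (Sum.inl j)) - a j) / 2 ≤ β)
    (h2 : ∀ g, (XS e1 e2 a b key (key (Sum.inr g)) + b g) / 2 ≤ β) :
    ∃ c : ℝ, 0 < c ∧ ∀ n : ℕ, 1 ≤ n →
      ∃ G : LearningGraph (Set.univ : Set (EdgeSlot n → Bool)) (subgraphFn H n),
        G.complexity ≤ c * (n : ℝ) ^ β := by
  set m := Fintype.card E with hm
  refine ⟨(2 * m + 1) + (k * (m * (2 * 8 ^ (k + m))) + m * (2 * 8 ^ (k + m))), by positivity, ?_⟩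
  intro n hn
  have hn1 : (1 : ℝ) ≤ n := by exact_mod_cast hn
  have hn0 : (0 : ℝ) < n := by linarith
  have pow1 : ∀ s : ℝ, 0 ≤ s → 1 ≤ (n : ℝ) ^ s := fun s hs => Real.one_le_rpow hn1 hs
  have powp : ∀ s : ℝ, 0 < (n : ℝ) ^ s := fun s => Real.rpow_pos_of_pos hn0 s
  have powm : ∀ s t : ℝ, s ≤ t → (n : ℝ) ^ s ≤ (n : ℝ) ^ t :=
    fun s t h => Real.rpow_le_rpow_of_exponent_le hn1 h
  let r : Fin k → ℕ := fun j => ⌈(n : ℝ) ^ a j⌉₊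
  let L : E → ℕ := fun g => ⌈(n : ℝ) ^ b g⌉₊
  have rlo : ∀ j, (n : ℝ) ^ a j ≤ r j := fun j => Nat.le_ceil _
  have rhi : ∀ j, (r j : ℝ) ≤ 2 * (n : ℝ) ^ a j := fun j => ceil_le_two (pow1 _ (ha0 j))
  have Llo : ∀ j, (n : ℝ) ^ b j ≤ L j := fun j => Nat.le_ceil _
  have Lhi : ∀ j, (L j : ℝ) ≤ 2 * (n : ℝ) ^ b j := fun j => ceil_le_two (pow1 _ (hb0 j))
  have rpos : ∀ j, (0 : ℝ) < r j := fun j => (powp _).trans_le (rlo j)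
  have Lpos : ∀ j, (0 : ℝ) < L j := fun j => (powp _).trans_le (Llo j)
  let x : Fin k ⊕ E → ℝ := Sum.elim (fun j => 1 - a j) (fun g => a (e1 g) + a (e2 g) - b g)
  have hrat : ∀ z, ratG e1 e2 r L n z ≤ 4 * (n : ℝ) ^ x z := by
    intro z
    cases z with
    | inl j =>
      simp only [ratG, Sum.elim_inl, x]
      rw [div_le_iff₀ (rpos j)]
      have e : (n : ℝ) ^ (1 - a j) * (n : ℝ) ^ a j = n := by
        rw [← Real.rpow_add hn0]; simp
      have := mul_le_mul_of_nonneg_left (rlo j) (powp (1 - a j)).le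
      have := mul_pos (powp (1 - a j)) (rpos j)
      nlinarith
    | inr g =>
      simp only [ratG, Sum.elim_inr, x]
      rw [div_le_iff₀ (Lpos g)]
      have e : (n : ℝ) ^ (a (e1 g) + a (e2 g) - b g) * (n : ℝ) ^ b g
          = (n : ℝ) ^ a (e1 g) * (n : ℝ) ^ a (e2 g) := by
        rw [← Real.rpow_add hn0, ← Real.rpow_add hn0]; congr 1; ring
      have h3 := mul_le_mul_of_nonneg_left (Llo g) (powp (a (e1 g) + a (e2 g) - b g)).le
      have h4 := mul_le_mul (rhi (e1 g)) (rhi (e2 g)) (rpos _).le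
        (mul_pos two_pos (powp (a (e1 g)))).le
      nlinarith
  have hrat0 : ∀ z, 0 ≤ ratG e1 e2 r L n z := by
    intro z
    cases z with
    | inl j => simp only [ratG, Sum.elim_inl]; positivity
    | inr g => simp only [ratG, Sum.elim_inr]; positivity
  have hprod : ∀ z, ∏ g ∈ (Finset.univ.filter (fun g => key g ≤ key z)).erase z,
      ratG e1 e2 r L n g ≤ 4 ^ (k + m) * (n : ℝ) ^ (XS e1 e2 a b key (key z) - x z) := by
    intro z
    refine (Finset.prod_le_prod (fun g _ => hrat0 g) (fun g _ => hrat g)).trans ?_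
    rw [Finset.prod_mul_distrib, Finset.prod_const, ← Real.rpow_sum_of_pos hn0]
    have hs : ∑ g ∈ (Finset.univ.filter (fun g => key g ≤ key z)).erase z, x g
        = XS e1 e2 a b key (key z) - x z := by
      rw [Finset.sum_erase_eq_sub (by simp), Finset.sum_filter, Fintype.sum_sum_type]
      rfl
    rw [hs]
    refine mul_le_mul_of_nonneg_right ?_ (powp _).le
    refine pow_le_pow_right₀ (by norm_num) ?_
    refine (Finset.card_le_univ _).trans ?_
    simp [hm]
  have hbig : ∀ s : ℝ, √(2 ^ (k + m) * (4 ^ (k + m) * (n : ℝ) ^ s)) ≤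
      8 ^ (k + m) * (n : ℝ) ^ (s / 2) := by
    intro s
    have : (2 : ℝ) ^ (k + m) * (4 ^ (k + m) * (n : ℝ) ^ s) = 8 ^ (k + m) * (n : ℝ) ^ s := by
      rw [← mul_assoc, ← mul_pow]; norm_num
    rw [this, Real.sqrt_mul (by positivity), sqrt_rpow_two hn0.le]
    refine mul_le_mul_of_nonneg_right (sqrt_le_of_one_le ?_) (powp _).le
    exact one_le_pow₀ (by norm_num)
  obtain ⟨G, hG⟩ := graphLG (n := n) e1 e2 r L H hn hE hne
    (fun j => by exact_mod_cast rpos j)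
    (fun j => by
      refine Nat.ceil_le.2 ?_
      calc (n : ℝ) ^ a j ≤ (n : ℝ) ^ (1 : ℝ) := powm _ _ (ha1 j)
        _ = n := Real.rpow_one _)
    (fun j => by exact_mod_cast Lpos j)
    (fun g => by
      refine Nat.ceil_le.2 ?_
      push_cast
      calc (n : ℝ) ^ b g ≤ (n : ℝ) ^ (a (e1 g) + a (e2 g)) := powm _ _ (hb1 g)
        _ = (n : ℝ) ^ a (e1 g) * (n : ℝ) ^ a (e2 g) := Real.rpow_add hn0 _ _
        _ ≤ _ := mul_le_mul (rlo _) (rlo _) (powp _).le (rpos _).le)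
    key hk1 hk2 ((2 * m + 1) * (n : ℝ) ^ β) (by have := powp β; positivity)
    (by
      calc ∑ g, (L g : ℝ) ≤ ∑ g : E, 2 * (n : ℝ) ^ β := Finset.sum_le_sum (fun g _ =>
            (Lhi g).trans (mul_le_mul_of_nonneg_left (powm _ _ (h0 g)) two_pos.le))
        _ = m * (2 * (n : ℝ) ^ β) := by
            rw [Finset.sum_const, Finset.card_univ, nsmul_eq_mul]
        _ ≤ _ := by have := powp β; nlinarith)
    (fun j => ∑ g, if e1 g = j ∨ e2 g = j then 2 * (n : ℝ) ^ (b g - a j) else 0)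
    (fun j => by
      obtain ⟨g, hg⟩ := hinc j
      refine Finset.sum_pos' (fun g _ => ?_) ⟨g, Finset.mem_univ _, ?_⟩
      · have := powp (b g - a j)
        split_ifs <;> positivity
      · rw [if_pos hg]
        have := powp (b g - a j)
        positivity)
    (fun j => by
      refine Finset.sum_le_sum (fun g _ => ?_)
      split_ifs
      · rw [div_le_iff₀ (rpos j)]
        refine (Lhi g).trans ?_
        have e : (n : ℝ) ^ (b g - a j) * (n : ℝ) ^ a j = (n : ℝ) ^ b g := by
          rw [← Real.rpow_add hn0]; congr 1; ring
        rw [← e, mul_assoc]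
        refine mul_le_mul_of_nonneg_left ?_ two_pos.le
        exact mul_le_mul_of_nonneg_left (rlo j) (powp _).le
      · exact le_rfl)
  refine ⟨G, hG.trans ?_⟩
  rw [← hm, add_mul (2 * (m : ℝ) + 1), add_mul ((k : ℝ) * _)]
  refine add_le_add le_rfl (add_le_add ?_ ?_)
  · have hj : ∀ j, (∑ g, if e1 g = j ∨ e2 g = j then 2 * (n : ℝ) ^ (b g - a j) else 0) *
        √(2 ^ (k + m) *
        ((∏ g ∈ (Finset.univ.filter (fun g => key g ≤ key (Sum.inl j))).erase (Sum.inl j),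
          ratG e1 e2 r L n g) * n)) ≤ m * (2 * 8 ^ (k + m)) * (n : ℝ) ^ β := by
      intro j
      have hsq : √(2 ^ (k + m) *
          ((∏ g ∈ (Finset.univ.filter (fun g => key g ≤ key (Sum.inl j))).erase (Sum.inl j),
          ratG e1 e2 r L n g) * n)) ≤
          8 ^ (k + m) * (n : ℝ) ^ ((XS e1 e2 a b key (key (Sum.inl j)) + a j) / 2) := by
        refine le_trans (Real.sqrt_le_sqrt ?_) (hbig _)
        refine mul_le_mul_of_nonneg_left ?_ (by positivity)
        refine (mul_le_mul_of_nonneg_right (hprod _) hn0.le).trans (le_of_eq ?_)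
        rw [mul_assoc]
        congr 1
        nth_rewrite 2 [← Real.rpow_one (n : ℝ)]
        rw [← Real.rpow_add hn0]
        congr 1
        simp only [x, Sum.elim_inl]
        ring
      have hpos : 0 ≤ (∑ g, if e1 g = j ∨ e2 g = j then 2 * (n : ℝ) ^ (b g - a j) else 0) := by
        refine Finset.sum_nonneg (fun g _ => ?_)
        have := powp (b g - a j)
        split_ifs <;> positivity
      refine (mul_le_mul_of_nonneg_left hsq hpos).trans ?_
      rw [Finset.sum_mul]
      have : ∀ g ∈ (Finset.univ : Finset E),
          (if e1 g = j ∨ e2 g = j then 2 * (n : ℝ) ^ (b g - a j) else 0) *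
          (8 ^ (k + m) * (n : ℝ) ^ ((XS e1 e2 a b key (key (Sum.inl j)) + a j) / 2)) ≤
          2 * 8 ^ (k + m) * (n : ℝ) ^ β := by
        intro g _
        split_ifs with hg
        · calc _ = 2 * 8 ^ (k + m) * ((n : ℝ) ^ (b g - a j) *
                (n : ℝ) ^ ((XS e1 e2 a b key (key (Sum.inl j)) + a j) / 2)) := by ring
            _ ≤ _ := by
              refine mul_le_mul_of_nonneg_left ?_ (by positivity)
              rw [← Real.rpow_add hn0]
              refine powm _ _ (le_trans (le_of_eq ?_) (h1 j g hg))
              ring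
        · rw [zero_mul]
          have := powp β
          positivity
      refine (Finset.sum_le_sum this).trans (le_of_eq ?_)
      rw [Finset.sum_const, Finset.card_univ, nsmul_eq_mul, ← hm]
      ring
    refine (Finset.sum_le_sum (fun j _ => hj j)).trans (le_of_eq ?_)
    rw [Finset.sum_const, Finset.card_univ, nsmul_eq_mul, Fintype.card_fin]
    ring
  · have hg : ∀ e, √(2 ^ (k + m) *
        ((∏ g ∈ (Finset.univ.filter (fun g => key g ≤ key (Sum.inr e))).erase (Sum.inr e),
          ratG e1 e2 r L n g) * (r (e1 e) * r (e2 e)))) ≤ 2 * 8 ^ (k + m) * (n : ℝ) ^ β := by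
      intro g
      have h4 := mul_le_mul (rhi (e1 g)) (rhi (e2 g)) (rpos _).le
        (mul_pos two_pos (powp (a (e1 g)))).le
      have h5 : (2 : ℝ) ^ (k + m) *
          ((∏ g ∈ (Finset.univ.filter (fun g' => key g' ≤ key (Sum.inr g))).erase (Sum.inr g),
          ratG e1 e2 r L n g) * (r (e1 g) * r (e2 g))) ≤ 2 ^ 2 * (2 ^ (k + m) * (4 ^ (k + m) *
            (n : ℝ) ^ (XS e1 e2 a b key (key (Sum.inr g)) + b g))) := by
        calc _ ≤ (2 : ℝ) ^ (k + m) * ((4 ^ (k + m) *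
            (n : ℝ) ^ (XS e1 e2 a b key (key (Sum.inr g)) - x (Sum.inr g))) *
              (2 * (n : ℝ) ^ a (e1 g) * (2 * (n : ℝ) ^ a (e2 g)))) := by
              refine mul_le_mul_of_nonneg_left ?_ (by positivity)
              refine mul_le_mul (hprod _) h4 (mul_pos (rpos _) (rpos _)).le ?_
              have := powp (XS e1 e2 a b key (key (Sum.inr g)) - x (Sum.inr g))
              positivity
          _ = 2 ^ 2 * (2 ^ (k + m) * (4 ^ (k + m) *
              ((n : ℝ) ^ (XS e1 e2 a b key (key (Sum.inr g)) - x (Sum.inr g)) *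
                (n : ℝ) ^ a (e1 g) * (n : ℝ) ^ a (e2 g)))) := by ring
          _ = _ := by
              rw [← Real.rpow_add hn0, ← Real.rpow_add hn0]
              congr 4
              simp only [x, Sum.elim_inr]
              ring
      refine (Real.sqrt_le_sqrt h5).trans ?_
      rw [Real.sqrt_mul (by positivity), Real.sqrt_sq (by norm_num), mul_assoc]
      refine mul_le_mul_of_nonneg_left ((hbig _).trans ?_) (by norm_num)
      exact mul_le_mul_of_nonneg_left (powm _ _ (h2 g)) (by positivity)
    refine (Finset.sum_le_sum (fun j _ => hg j)).trans (le_of_eq ?_)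
    rw [Finset.sum_const, Finset.card_univ, nsmul_eq_mul, ← hm]
    ring

end Param

/-! ### Part 8: the two algorithms -/

section Final

variable {k m d : ℕ} {E : Type} [Fintype E] [DecidableEq E] (e1 e2 : E → Fin k)

lemma alg_one (hk : 3 ≤ k) (H : SimpleGraph (Fin k)) (hm : Fintype.card E = m)
    (hE : ∀ i j, H.Adj i j → ∃ g, (e1 g = i ∧ e2 g = j) ∨ (e1 g = j ∧ e2 g = i))
    (hne : ∀ g, e1 g ≠ e2 g) (hinc : ∀ j, ∃ g, e1 g = j ∨ e2 g = j) (β : ℝ)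
    (hβ : β = 2 - 2 / k - ((k : ℝ) ^ 2 - 2 * (m + 1)) / (k * (k + 1) * (m + 1))) :
    ∃ c : ℝ, 0 < c ∧ ∀ n : ℕ, 1 ≤ n →
      ∃ G : LearningGraph (Set.univ : Set (EdgeSlot n → Bool)) (subgraphFn H n),
        G.complexity ≤ c * (n : ℝ) ^ β := by
  have hk0 : (3 : ℝ) ≤ k := by exact_mod_cast hk
  have hm0 : (0 : ℝ) ≤ m := by positivity
  obtain ⟨ρ, hρ⟩ : ∃ ρ : ℝ, ρ = k / (k + 1) := ⟨_, rfl⟩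
  obtain ⟨σ, hσ⟩ : ∃ σ : ℝ, σ = ρ / (m + 1) := ⟨_, rfl⟩
  have hβ' : β = 2 * ρ - σ := by
    rw [hβ, hσ, hρ]
    field_simp
    ring
  have hρ0 : 0 ≤ ρ := by rw [hρ]; positivity
  have hρ1 : ρ ≤ 1 := by rw [hρ, div_le_one (by positivity)]; linarith
  have hρe : k * (1 - ρ) = ρ := by rw [hρ]; field_simp; ring
  have hσ0 : 0 ≤ σ := by rw [hσ]; positivity
  have hσe : (m + 1) * σ = ρ := by rw [hσ]; field_simp
  have hσ1 : σ ≤ ρ := by nlinarith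
  have X0 : XS e1 e2 (fun _ => ρ) (fun _ => β) (Sum.elim (fun _ => 0) (fun _ => 1)) 0 = ρ := by
    simp [XS]; linarith [hρe]
  have X1 : XS e1 e2 (fun _ => ρ) (fun _ => β) (Sum.elim (fun _ => 0) (fun _ => 1)) 1 =
      ρ + m * σ := by
    simp only [XS, Sum.elim_inl, Sum.elim_inr, zero_le, le_refl, if_true, Finset.sum_const,
      Finset.card_univ, nsmul_eq_mul, Fintype.card_fin, hm, hρe, hβ']
    ring
  refine paramLG e1 e2 H hE hne hinc (Sum.elim (fun _ => 0) (fun _ => 1)) (fun g => by simp)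
    (fun g => by simp) (fun _ => ρ) (fun _ => β) (fun _ => hρ0) (fun _ => hρ1)
    (fun _ => by rw [hβ']; linarith) (fun _ => by rw [hβ']; linarith) β (fun _ => le_rfl) ?_ ?_
  · intro j g _
    simp only [Sum.elim_inl, X0]
    linarith
  · intro g
    simp only [Sum.elim_inr, X1]
    rw [hβ']
    linarith

lemma alg_two (hk : 3 ≤ k) (H : SimpleGraph (Fin k)) (hm : Fintype.card E = m)
    (hE : ∀ i j, H.Adj i j → ∃ g, (e1 g = i ∧ e2 g = j) ∨ (e1 g = j ∧ e2 g = i))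
    (hne : ∀ g, e1 g ≠ e2 g) (hinc : ∀ j, ∃ g, e1 g = j ∨ e2 g = j) (v : Fin k)
    (hd : (Finset.univ.filter (fun g => e1 g = v ∨ e2 g = v)).card = d) (hd1 : 1 ≤ d)
    (hdk : d + 1 ≤ k) (β : ℝ)
    (hβ : β = 2 - 2 / k - (2 * (k : ℝ) - d - 3) / (k * (d + 1) * ((m : ℝ) - d + 2))) :
    ∃ c : ℝ, 0 < c ∧ ∀ n : ℕ, 1 ≤ n →
      ∃ G : LearningGraph (Set.univ : Set (EdgeSlot n → Bool)) (subgraphFn H n),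
        G.complexity ≤ c * (n : ℝ) ^ β := by
  have hk0 : (3 : ℝ) ≤ k := by exact_mod_cast hk
  have hd0 : (1 : ℝ) ≤ d := by exact_mod_cast hd1
  have hdk' : (d : ℝ) + 1 ≤ k := by exact_mod_cast hdk
  have hdm : d ≤ m := by rw [← hd, ← hm]; exact Finset.card_le_univ _
  have hdm' : (0 : ℝ) ≤ (m : ℝ) - d := by
    have : (d : ℝ) ≤ m := by exact_mod_cast hdm
    linarith
  have hmd2 : (0 : ℝ) < (m : ℝ) - d + 2 := by linarith
  obtain ⟨ρ, hρ⟩ : ∃ ρ : ℝ, ρ = 1 - 1 / k := ⟨_, rfl⟩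
  obtain ⟨σ, hσ⟩ : ∃ σ : ℝ, σ = (2 * (k : ℝ) - d - 3) / (k * (d + 1) * ((m : ℝ) - d + 2)) :=
    ⟨_, rfl⟩
  obtain ⟨μ, hμ⟩ : ∃ μ : ℝ, μ = ρ * d / (d + 1) := ⟨_, rfl⟩
  have hβ' : β = 2 * ρ - σ := by rw [hβ, hσ, hρ]; ring
  have hki : 1 / (k : ℝ) ≤ 1 / 3 := one_div_le_one_div_of_le (by norm_num) hk0
  have hki0 : 0 < 1 / (k : ℝ) := by positivity
  have hρ0 : 0 ≤ ρ := by rw [hρ]; linarith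
  have hρ1 : ρ ≤ 1 := by rw [hρ]; linarith
  have hσ0 : 0 ≤ σ := by
    rw [hσ]
    refine div_nonneg (by linarith) ?_
    positivity
  have hμe : μ * (d + 1) = ρ * d := by rw [hμ]; field_simp
  have hμ0 : 0 ≤ μ := by rw [hμ]; positivity
  have hμ1 : μ ≤ ρ := by nlinarith
  have hμd : d * (ρ - μ) = μ := by linarith
  -- the key identity
  have hσe : ((m : ℝ) - d + 2) * σ = 3 * ρ - 1 - 2 * μ := by
    rw [hσ, hμ, hρ]
    field_simp
    ring
  have hσb : ((m : ℝ) - d + 2) * σ ≤ ρ := by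
    rw [hσe]
    have : ρ ≤ 2 * μ := by nlinarith
    linarith
  have hσ1 : ((m : ℝ) - d + 1) * σ ≤ ρ := by linarith
  have hσ2 : σ ≤ ρ := by
    have : 0 ≤ ((m : ℝ) - d) * σ := mul_nonneg hdm' hσ0
    linarith
  let inc : E → Prop := fun g => e1 g = v ∨ e2 g = v
  let a : Fin k → ℝ := fun j => if j = v then 0 else ρ
  let b : E → ℝ := fun g => if e1 g = v ∨ e2 g = v then μ else β
  let key : Fin k ⊕ E → ℕ := Sum.elim (fun j => if j = v then 2 else 0)
    (fun g => if e1 g = v ∨ e2 g = v then 3 else 1)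
  have hav : a v = 0 := by simp [a]
  have hanv : ∀ j, j ≠ v → a j = ρ := by intro j hj; simp [a, hj]
  have hsum : ∀ p q : ℝ, ∑ g : E, (if e1 g = v ∨ e2 g = v then p else q) = d * p + (m - d) * q := by
    intro p q
    have e : ∀ g : E, (if e1 g = v ∨ e2 g = v then p else q) =
        (if e1 g = v ∨ e2 g = v then (p - q) else 0) + q := by
      intro g; split_ifs <;> ring
    rw [Finset.sum_congr rfl (fun g _ => e g), Finset.sum_add_distrib, ← Finset.sum_filter,
      Finset.sum_const, Finset.sum_const, hd, Finset.card_univ, hm]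
    simp only [nsmul_eq_mul]
    ring
  have hsumv : ∀ p q : ℝ, ∑ j : Fin k, (if j = v then p else q) = p + (k - 1) * q := by
    intro p q
    have e : ∀ g : Fin k, (if g = v then p else q) = (if g = v then (p - q) else 0) + q := by
      intro g; split_ifs <;> ring
    rw [Finset.sum_congr rfl (fun g _ => e g), Finset.sum_add_distrib, Finset.sum_ite_eq',
      Finset.sum_const, Finset.card_univ, Fintype.card_fin]
    simp only [nsmul_eq_mul, Finset.mem_univ, if_true]
    ring
  have hkρ : ((k : ℝ) - 1) * (1 - ρ) = ρ := by rw [hρ]; field_simp; ring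
  have hsumE : ∀ g, a (e1 g) + a (e2 g) - b g = if e1 g = v ∨ e2 g = v then ρ - μ else σ := by
    intro g
    by_cases h1 : e1 g = v
    · have h2 : e2 g ≠ v := fun h2 => hne g (h1.trans h2.symm)
      simp [a, b, h1, h2]
    · by_cases h2 : e2 g = v
      · simp [a, b, h1, h2]
      · simp [a, b, h1, h2, hβ']; ring
  have X0 : XS e1 e2 a b key 0 = ρ := by
    have s1 : ∀ j, (if key (Sum.inl j) ≤ 0 then 1 - a j else 0) = if j = v then 0 else 1 - ρ := by
      intro j; by_cases hj : j = v <;> simp [key, a, hj]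
    have s2 : ∀ g, (if key (Sum.inr g) ≤ 0 then a (e1 g) + a (e2 g) - b g else 0) = 0 := by
      intro g; by_cases hj : e1 g = v ∨ e2 g = v <;> simp [key, hj]
    rw [XS, Finset.sum_congr rfl (fun j _ => s1 j), Finset.sum_congr rfl (fun j _ => s2 j), hsumv,
      hkρ]
    simp
  have X1 : XS e1 e2 a b key 1 = ρ + (m - d) * σ := by
    have s1 : ∀ j, (if key (Sum.inl j) ≤ 1 then 1 - a j else 0) = if j = v then 0 else 1 - ρ := by
      intro j; by_cases hj : j = v <;> simp [key, a, hj]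
    have s2 : ∀ g, (if key (Sum.inr g) ≤ 1 then a (e1 g) + a (e2 g) - b g else 0) =
        if e1 g = v ∨ e2 g = v then 0 else σ := by
      intro g; rw [hsumE]; by_cases hj : e1 g = v ∨ e2 g = v <;> simp [key, hj]
    rw [XS, Finset.sum_congr rfl (fun j _ => s1 j), Finset.sum_congr rfl (fun j _ => s2 j), hsumv,
      hkρ, hsum]
    ring
  have X2 : XS e1 e2 a b key 2 = ρ + (m - d) * σ + 1 := by
    have s1 : ∀ j, (if key (Sum.inl j) ≤ 2 then 1 - a j else 0) = if j = v then 1 else 1 - ρ := by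
      intro j; by_cases hj : j = v <;> simp [key, a, hj]
    have s2 : ∀ g, (if key (Sum.inr g) ≤ 2 then a (e1 g) + a (e2 g) - b g else 0) =
        if e1 g = v ∨ e2 g = v then 0 else σ := by
      intro g; rw [hsumE]; by_cases hj : e1 g = v ∨ e2 g = v <;> simp [key, hj]
    rw [XS, Finset.sum_congr rfl (fun j _ => s1 j), Finset.sum_congr rfl (fun j _ => s2 j), hsumv,
      hkρ, hsum]
    ring
  have X3 : XS e1 e2 a b key 3 = ρ + (m - d) * σ + 1 + μ := by
    have s1 : ∀ j, (if key (Sum.inl j) ≤ 3 then 1 - a j else 0) = if j = v then 1 else 1 - ρ := by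
      intro j; by_cases hj : j = v <;> simp [key, a, hj]
    have s2 : ∀ g, (if key (Sum.inr g) ≤ 3 then a (e1 g) + a (e2 g) - b g else 0) =
        if e1 g = v ∨ e2 g = v then ρ - μ else σ := by
      intro g; rw [hsumE]; by_cases hj : e1 g = v ∨ e2 g = v <;> simp [key, hj]
    rw [XS, Finset.sum_congr rfl (fun j _ => s1 j), Finset.sum_congr rfl (fun j _ => s2 j), hsumv,
      hkρ, hsum, hμd]
    ring
  have hbβ : ∀ g, b g ≤ β := by
    intro g
    simp only [b]
    split_ifs
    · rw [hβ']; linarith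
    · exact le_rfl
  refine paramLG e1 e2 H hE hne hinc key ?_ ?_ a b ?_ ?_ ?_ ?_ β hbβ ?_ ?_
  · intro g
    by_cases h1 : e1 g = v <;> by_cases h2 : e2 g = v <;> simp [key, h1, h2]
  · intro g
    by_cases h1 : e1 g = v <;> by_cases h2 : e2 g = v <;> simp [key, h1, h2]
  · intro j
    simp only [a]
    split_ifs
    · exact le_rfl
    · exact hρ0
  · intro j
    simp only [a]
    split_ifs
    · exact zero_le_one
    · exact hρ1
  · intro g
    simp only [b]
    split_ifs
    · exact hμ0
    · rw [hβ']; linarith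
  · intro g
    have := hsumE g
    split_ifs at this <;> linarith
  · intro j g hg
    by_cases hj : j = v
    · subst hj
      have hkj : key (Sum.inl j) = 2 := by simp [key]
      have hbg : b g = μ := by simp only [b]; rw [if_pos hg]
      rw [hkj, X2, hav, hbg, hβ']
      linarith
    · have hkj : key (Sum.inl j) = 0 := by simp [key, hj]
      rw [hkj, X0, hanv j hj]
      have := hbβ g
      linarith
  · intro g
    by_cases hg : e1 g = v ∨ e2 g = v
    · have hkj : key (Sum.inr g) = 3 := by simp only [key, Sum.elim_inr]; rw [if_pos hg]
      have hbg : b g = μ := by simp only [b]; rw [if_pos hg]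
      rw [hkj, X3, hbg, hβ']
      linarith
    · have hkj : key (Sum.inr g) = 1 := by simp only [key, Sum.elim_inr]; rw [if_neg hg]
      have hbg : b g = β := by simp only [b]; rw [if_neg hg]
      rw [hkj, X1, hbg, hβ']
      linarith

end Final

theorem subgraph_learningGraph_main (k m d : ℕ) (hk : 3 ≤ k)
    (H : SimpleGraph (Fin k)) [DecidableRel H.Adj]
    (hm : H.edgeFinset.card = m) (hd : H.minDegree = d) (hd1 : 1 ≤ d)
    (t : ℝ)
    (ht : t = max (((k : ℝ) ^ 2 - 2 * (m + 1)) / (k * (k + 1) * (m + 1)))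
      ((2 * (k : ℝ) - d - 3) / (k * (d + 1) * ((m : ℝ) - d + 2)))) :
    ∃ c : ℝ, 0 < c ∧ ∀ n : ℕ, 1 ≤ n →
      ∃ G : LearningGraph (Set.univ : Set (EdgeSlot n → Bool)) (subgraphFn H n),
        G.complexity ≤ c * (n : ℝ) ^ ((2 : ℝ) - 2 / k - t) := by
  classical
  let E : Type := {x // x ∈ H.edgeFinset}
  let e1 : E → Fin k := fun g => (Quot.out g.1).1
  let e2 : E → Fin k := fun g => (Quot.out g.1).2
  have hg : ∀ g : E, s(e1 g, e2 g) = g.1 := fun g => Quot.out_eq g.1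
  have hadj : ∀ g : E, H.Adj (e1 g) (e2 g) := by
    intro g
    rw [← SimpleGraph.mem_edgeSet, hg, ← SimpleGraph.mem_edgeFinset]
    exact g.2
  have hne : ∀ g, e1 g ≠ e2 g := fun g => (hadj g).ne
  have hE : ∀ i j, H.Adj i j → ∃ g, (e1 g = i ∧ e2 g = j) ∨ (e1 g = j ∧ e2 g = i) := by
    intro i j hij
    let g : E := ⟨s(i, j), by rw [SimpleGraph.mem_edgeFinset]; exact hij⟩
    refine ⟨g, ?_⟩
    have := hg g
    rw [show g.1 = s(i, j) from rfl, Sym2.eq_iff] at this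
    exact this
  have hcard : Fintype.card E = m := by rw [← hm]; exact Fintype.card_coe _
  have : Nonempty (Fin k) := ⟨⟨0, by omega⟩⟩
  have hmem : ∀ (v : Fin k) (g : E), v ∈ g.1 ↔ (e1 g = v ∨ e2 g = v) := by
    intro v g
    rw [← hg g, Sym2.mem_iff]
    constructor <;> rintro (h | h) <;> simp [h]
  have hinc : ∀ j, ∃ g, e1 g = j ∨ e2 g = j := by
    intro j
    have h1 : 0 < H.degree j := by
      have := H.minDegree_le_degree j
      omega
    rw [SimpleGraph.degree_pos_iff_exists_adj] at h1
    obtain ⟨w, hw⟩ := h1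
    obtain ⟨g, h | h⟩ := hE j w hw
    · exact ⟨g, Or.inl h.1⟩
    · exact ⟨g, Or.inr h.2⟩
  rcases max_choice (((k : ℝ) ^ 2 - 2 * (m + 1)) / (k * (k + 1) * (m + 1)))
      ((2 * (k : ℝ) - d - 3) / (k * (d + 1) * ((m : ℝ) - d + 2))) with h | h
  · rw [h] at ht
    exact alg_one e1 e2 hk H hcard hE hne hinc _ (by rw [ht])
  · rw [h] at ht
    obtain ⟨v, hv⟩ := H.exists_minimal_degree_vertex
    have hvd : H.degree v = d := by rw [← hv, hd]
    refine alg_two e1 e2 hk H hcard hE hne hinc v ?_ hd1 ?_ _ (by rw [ht])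
    · rw [← hvd, ← SimpleGraph.card_incidenceFinset_eq_degree, SimpleGraph.incidenceFinset_eq_filter]
      refine Finset.card_bij (fun g _ => g.1) ?_ ?_ ?_
      · intro g hgm
        simp only [Finset.mem_filter, Finset.mem_univ, true_and] at hgm ⊢
        exact ⟨g.2, (hmem v g).2 hgm⟩
      · intro g _ g' _ h
        exact Subtype.ext h
      · intro e he
        rw [Finset.mem_filter] at he
        refine ⟨⟨e, he.1⟩, ?_, rfl⟩
        simp only [Finset.mem_filter, Finset.mem_univ, true_and]
        exact (hmem v ⟨e, he.1⟩).1 he.2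
    · have := H.degree_lt_card_verts v
      rw [Fintype.card_fin] at this
      omega
end

section
/- Let 𝒢 be a learning graph for a function f whose edge set ℰ is partitioned into K stages E₁, …, E_K, where the level of a vertex is its distance from the root and a stage is the set of all edges of 𝒢 going from vertices at level i to vertices at level j for some i < j, and where every flow p_y has total flow value 1 through each stage. For each stage define C₀(E_h) = Σ_{e∈E_h} ℓ(e)w(e), C₁(E_h) = max_y Σ_{e∈E_h} ℓ(e)p_y(e)²/w(e), and C(E_h) = √(C₀(E_h)C₁(E_h)). Then there exists a positive weight function w′ on ℰ such that the complexity of 𝒢 with weights w′ satisfies C^{w′}(𝒢) ≤ K·(C(E₁) + … + C(E_K)). -/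
namespace LearningGraph

variable {ι : Type} [Fintype ι] [DecidableEq ι] {D : Set (ι → Bool)}
  {f : (ι → Bool) → Bool}

/-- The negative complexity with respect to an alternative weight function. -/
noncomputable def C0With (G : LearningGraph D f) (w' : G.V × G.V → ℝ) : ℝ :=
  ∑ e ∈ G.E, (G.len e : ℝ) * w' e

/-- The positive complexity with respect to an alternative weight function. -/
noncomputable def C1With (G : LearningGraph D f) (w' : G.V × G.V → ℝ) : ℝ :=
  ⨆ y : {y : ι → Bool // y ∈ D ∧ f y = true},
    ∑ e ∈ G.E, (G.len e : ℝ) * (G.p y.1 e) ^ 2 / w' e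

/-- The complexity with respect to an alternative weight function. -/
noncomputable def complexityWith (G : LearningGraph D f) (w' : G.V × G.V → ℝ) : ℝ :=
  Real.sqrt (G.C0With w' * G.C1With w')

/-- `G.walkTo t v` : there is a directed walk of length exactly `t` from the root to `v`. -/
def walkTo (G : LearningGraph D f) : ℕ → G.V → Prop
  | 0, v => v = G.root
  | (t + 1), v => ∃ u : G.V, G.walkTo t u ∧ (u, v) ∈ G.E

end LearningGraph

/-- rescaling factor for one stage -/
theorem exists_stage_scale (A B T : ℝ) (hA : 0 ≤ A) (hB : 0 ≤ B) (hAB : A = 0 → B = 0)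
    (hT : 0 < T) (hle : Real.sqrt (A * B) ≤ T) :
    ∃ c : ℝ, 0 < c ∧ c * A ≤ T ∧ B / c ≤ Real.sqrt (A * B) := by
  rcases hA.eq_or_lt with h | hA'
  · have hB0 := hAB h.symm
    subst hB0
    subst h
    exact ⟨1, one_pos, by simpa using hT.le, by simp⟩
  · rcases hB.eq_or_lt with h | hB'
    · subst h
      refine ⟨T / A, by positivity, ?_, by simp⟩
      rw [div_mul_cancel₀ _ hA'.ne']
    · have ha := Real.sqrt_pos.2 hA'
      have hb := Real.sqrt_pos.2 hB'
      have ea := Real.mul_self_sqrt hA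
      have eb := Real.mul_self_sqrt hB
      rw [Real.sqrt_mul hA] at hle ⊢
      refine ⟨Real.sqrt B / Real.sqrt A, by positivity, ?_, ?_⟩
      · refine le_trans (le_of_eq ?_) hle
        rw [div_mul_eq_mul_div, div_eq_iff ha.ne']
        nlinarith
      · refine le_of_eq ?_
        rw [div_div_eq_mul_div, div_eq_iff hb.ne']
        nlinarith

open LearningGraph in
/-- **Lemma 6 of the paper (Belovs).** If the edge set of a learning graph is partitioned into
`K` stages (sets of edges going from one level to a deeper level, where the level of a vertex
is its distance from the root), and every flow has total value 1 through each stage, then the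
weights can be modified so that the complexity of the learning graph is bounded by (a constant
`K` times) the sum of the complexities of the stages. -/
theorem learningGraph_stages {ι : Type} [Fintype ι] [DecidableEq ι]
    {D : Set (ι → Bool)} {f : (ι → Bool) → Bool}
    (G : LearningGraph D f) (K : ℕ) (hK : 0 < K)
    (stage : Fin K → Finset (G.V × G.V))
    -- the level function: `lev v` is the distance from the root to `v`
    (lev : G.V → ℕ)
    (hlev : ∀ v : G.V, G.walkTo (lev v) v ∧ ∀ t : ℕ, G.walkTo t v → lev v ≤ t)
    -- each stage is the set of all edges from level `i` to level `j` for some `i < j`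
    (hstage : ∀ h : Fin K, ∃ i j : ℕ, i < j ∧
      stage h = G.E.filter (fun e => lev e.1 = i ∧ lev e.2 = j))
    -- the stages partition the edge set
    (hdisj : ∀ h h' : Fin K, h ≠ h' → Disjoint (stage h) (stage h'))
    (hunion : Finset.univ.biUnion stage = G.E)
    -- every flow has total value 1 through each stage (value of a flow over a set of
    -- edges: the flow leaving the sources of the set)
    (hval : ∀ y ∈ D, f y = true → ∀ h : Fin K,
      ∑ e ∈ (stage h).filter (fun e => ∀ e' ∈ stage h, e'.2 ≠ e.1), G.p y e = 1) :
    ∃ w' : G.V × G.V → ℝ, (∀ e ∈ G.E, 0 < w' e) ∧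
      G.complexityWith w' ≤ K * ∑ h : Fin K,
        Real.sqrt ((∑ e ∈ stage h, (G.len e : ℝ) * G.w e) *
          (⨆ y : {y : ι → Bool // y ∈ D ∧ f y = true},
            ∑ e ∈ stage h, (G.len e : ℝ) * (G.p y.1 e) ^ 2 / G.w e)) := by
  classical
  set A : Fin K → ℝ := fun h => ∑ e ∈ stage h, (G.len e : ℝ) * G.w e with hAdef
  set B : Fin K → ℝ := fun h => ⨆ y : {y : ι → Bool // y ∈ D ∧ f y = true},
            ∑ e ∈ stage h, (G.len e : ℝ) * (G.p y.1 e) ^ 2 / G.w e with hBdef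
  change ∃ w' : G.V × G.V → ℝ, (∀ e ∈ G.E, 0 < w' e) ∧
      G.complexityWith w' ≤ K * ∑ h : Fin K, Real.sqrt (A h * B h)
  have hsub : ∀ h, ∀ e ∈ stage h, 0 < G.w e := fun h e he =>
    G.w_pos e (hunion ▸ Finset.mem_biUnion.2 ⟨h, Finset.mem_univ _, he⟩)
  have hA : ∀ h, 0 ≤ A h := fun h =>
    Finset.sum_nonneg fun e he => mul_nonneg (Nat.cast_nonneg _) (hsub h e he).le
  have hB : ∀ h, 0 ≤ B h := fun h =>
    Real.iSup_nonneg fun y => Finset.sum_nonneg fun e he =>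
      div_nonneg (mul_nonneg (Nat.cast_nonneg _) (sq_nonneg _)) (hsub h e he).le
  have hAB : ∀ h, A h = 0 → B h = 0 := by
    intro h h0
    have hz := (Finset.sum_eq_zero_iff_of_nonneg
      (fun e he => mul_nonneg (Nat.cast_nonneg _) (hsub h e he).le)).1 h0
    have hl : ∀ e ∈ stage h, (G.len e : ℝ) = 0 := fun e he =>
      (mul_eq_zero.1 (hz e he)).resolve_right (hsub h e he).ne'
    have hs : ∀ y : {y : ι → Bool // y ∈ D ∧ f y = true},
        ∑ e ∈ stage h, (G.len e : ℝ) * (G.p y.1 e) ^ 2 / G.w e = 0 := fun y =>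
      Finset.sum_eq_zero fun e he => by rw [hl e he]; simp
    simp only [hBdef, hs]
    exact Real.iSup_const_zero
  have hyB : ∀ h, ∀ y : {y : ι → Bool // y ∈ D ∧ f y = true},
      ∑ e ∈ stage h, (G.len e : ℝ) * (G.p y.1 e) ^ 2 / G.w e ≤ B h := fun h y =>
    le_ciSup (f := fun y : {y : ι → Bool // y ∈ D ∧ f y = true} =>
      ∑ e ∈ stage h, (G.len e : ℝ) * (G.p y.1 e) ^ 2 / G.w e) (Set.finite_range _).bddAbove y
  have hsplit : ∀ g : G.V × G.V → ℝ, ∑ e ∈ G.E, g e = ∑ h, ∑ e ∈ stage h, g e := by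
    intro g
    rw [← hunion, Finset.sum_biUnion]
    intro h _ h' _ hne
    exact hdisj h h' hne
  set T := ∑ h : Fin K, Real.sqrt (A h * B h) with hT
  have hT0 : 0 ≤ T := Finset.sum_nonneg fun _ _ => Real.sqrt_nonneg _
  have hle : ∀ h, Real.sqrt (A h * B h) ≤ T := fun h =>
    Finset.single_le_sum (f := fun h => Real.sqrt (A h * B h))
      (fun _ _ => Real.sqrt_nonneg _) (Finset.mem_univ h)
  rcases hT0.eq_or_lt with h0 | hTpos
  · refine ⟨G.w, G.w_pos, ?_⟩
    rw [← h0, mul_zero]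
    have hBz : ∀ h, B h = 0 := by
      intro h
      have h1 : A h * B h ≤ 0 := Real.sqrt_eq_zero'.1
        (le_antisymm (h0 ▸ hle h) (Real.sqrt_nonneg _))
      have h2 := le_antisymm h1 (mul_nonneg (hA h) (hB h))
      rcases mul_eq_zero.1 h2 with h3 | h3
      · exact hAB h h3
      · exact h3
    refine (Real.sqrt_eq_zero'.2 ?_).le
    refine mul_nonpos_of_nonneg_of_nonpos ?_ ?_
    · exact Finset.sum_nonneg fun e he => mul_nonneg (Nat.cast_nonneg _) (G.w_pos e he).le
    · refine Real.iSup_nonpos fun y => ?_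
      rw [hsplit]
      exact Finset.sum_nonpos fun h _ => (hyB h y).trans (hBz h).le
  · choose c hc hcA hcB using fun h =>
      exists_stage_scale (A h) (B h) T (hA h) (hB h) (hAB h) hTpos (hle h)
    let w' : G.V × G.V → ℝ := fun e => ∑ h, if e ∈ stage h then c h * G.w e else 0
    have hw' : ∀ h, ∀ e ∈ stage h, w' e = c h * G.w e := by
      intro h e he
      change ∑ h, (if e ∈ stage h then c h * G.w e else 0) = _
      rw [Finset.sum_eq_single h]
      · rw [if_pos he]
      · intro h' _ hne
        exact if_neg fun he' => Finset.disjoint_left.1 (hdisj h' h hne) he' he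
      · simp
    refine ⟨w', ?_, ?_⟩
    · intro e he
      rw [← hunion] at he
      obtain ⟨h, -, he⟩ := Finset.mem_biUnion.1 he
      rw [hw' h e he]
      exact mul_pos (hc h) (hsub h e he)
    · have hC0 : G.C0With w' ≤ K * T := by
        unfold LearningGraph.C0With
        rw [hsplit]
        calc _ ≤ ∑ h : Fin K, T := by
              refine Finset.sum_le_sum fun h _ => ?_
              refine le_trans (le_of_eq ?_) (hcA h)
              rw [hAdef, Finset.mul_sum]
              refine Finset.sum_congr rfl fun e he => ?_
              rw [hw' h e he]
              ring
          _ = K * T := by simp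
      have hC1 : G.C1With w' ≤ T := by
        refine Real.iSup_le (fun y => ?_) hT0
        rw [hsplit]
        refine Finset.sum_le_sum fun h _ => ?_
        refine le_trans ?_ (hcB h)
        refine le_trans (le_of_eq ?_) (div_le_div_of_nonneg_right (hyB h y) (hc h).le)
        rw [Finset.sum_div]
        refine Finset.sum_congr rfl fun e he => ?_
        rw [hw' h e he, div_div, mul_comm (c h)]
      have hK1 : (1 : ℝ) ≤ K := by exact_mod_cast hK
      refine Real.sqrt_le_iff.2 ⟨by positivity, ?_⟩
      have hC1' : 0 ≤ G.C1With w' := by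
        refine Real.iSup_nonneg fun y => ?_
        rw [hsplit]
        refine Finset.sum_nonneg fun h _ => Finset.sum_nonneg fun e he => ?_
        rw [hw' h e he]
        have := hsub h e he
        have := hc h
        positivity
      calc G.C0With w' * G.C1With w' ≤ (K * T) * T :=
            mul_le_mul hC0 hC1 hC1' (by positivity)
        _ ≤ (K * T) * (K * T) := by
            refine mul_le_mul_of_nonneg_left ?_ (by positivity)
            nlinarith
        _ = (K * T) ^ 2 := by ring
end

section
/- Let E be a finite set partitioned into nonempty subsets E₁, …, E_s, let ℓ : E → ℝ_{≥0}, let w : E → ℝ_{>0}, let Y be a nonempty finite set, and for each y ∈ Y let p_y : E → ℝ_{≥0}. Suppose there are reals α₁, …, α_s > 0 with Σ_i α_i = 1 (representing the flow value through E_i, the same for every y). For each i define C₀(E_i) = Σ_{e∈E_i} ℓ(e)w(e) and C₁(E_i) = max_{y∈Y} Σ_{e∈E_i} ℓ(e)p_y(e)²/(w(e)α_i²), and assume C₁(E_i) > 0. Define w′(e) = α_i · C₁(E_i) · w(e) for e ∈ E_i. Then (Σ_{e∈E} ℓ(e)w′(e)) · (max_{y∈Y} Σ_{e∈E} ℓ(e)p_y(e)²/w′(e))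 ≤ max_i C₀(E_i)·C₁(E_i). -/
/-- **Lemma 8 of the paper (reweighting lemma), analytic form.** Let `E` be partitioned into
nonempty parts `Ep 1, …, Ep s`, with lengths `ℓ ≥ 0`, weights `w > 0`, flows `p y ≥ 0`, and
common flow values `a i > 0` through the parts summing to `1`. With
`C₀(Eᵢ) = Σ_{e∈Eᵢ} ℓ(e)w(e)`, `C₁(Eᵢ) = max_y Σ_{e∈Eᵢ} ℓ(e)p_y(e)²/(w(e)αᵢ²)` assumed
positive, and new weights `w'(e) = αᵢ·C₁(Eᵢ)·w(e)` on `Eᵢ`, the squared complexity of `E`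
under `w'` is at most `max_i C₀(Eᵢ)·C₁(Eᵢ)`. -/
theorem reweighting_lemma {β : Type} [DecidableEq β]
    (E : Finset β) (s : ℕ) (hs : 0 < s)
    (Ep : Fin s → Finset β) (hne : ∀ i, (Ep i).Nonempty)
    (hdisj : ∀ i j : Fin s, i ≠ j → Disjoint (Ep i) (Ep j))
    (hunion : Finset.univ.biUnion Ep = E)
    (ℓ : β → ℝ) (hℓ : ∀ e ∈ E, 0 ≤ ℓ e)
    (w : β → ℝ) (hw : ∀ e ∈ E, 0 < w e)
    {Y : Type} [Fintype Y] [Nonempty Y]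
    (p : Y → β → ℝ) (hp : ∀ y : Y, ∀ e ∈ E, 0 ≤ p y e)
    (a : Fin s → ℝ) (ha : ∀ i, 0 < a i) (hasum : ∑ i, a i = 1)
    (C1 : Fin s → ℝ)
    (hC1 : ∀ i, C1 i = ⨆ y : Y, ∑ e ∈ Ep i, ℓ e * (p y e) ^ 2 / (w e * (a i) ^ 2))
    (hC1pos : ∀ i, 0 < C1 i)
    (w' : β → ℝ) (hw' : ∀ i, ∀ e ∈ Ep i, w' e = a i * C1 i * w e) :
    (∑ e ∈ E, ℓ e * w' e) * (⨆ y : Y, ∑ e ∈ E, ℓ e * (p y e) ^ 2 / w' e) ≤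
      ⨆ i : Fin s, (∑ e ∈ Ep i, ℓ e * w e) * C1 i := by
  have hmem : ∀ i, ∀ e ∈ Ep i, e ∈ E := by
    intro i e he
    rw [← hunion]
    exact Finset.mem_biUnion.2 ⟨i, Finset.mem_univ i, he⟩
  have hsplit : ∀ f : β → ℝ, ∑ e ∈ E, f e = ∑ i, ∑ e ∈ Ep i, f e := by
    intro f
    rw [← hunion, Finset.sum_biUnion]
    intro i _ j _ hij
    exact hdisj i j hij
  have hA : ∑ e ∈ E, ℓ e * w' e = ∑ i, a i * ((∑ e ∈ Ep i, ℓ e * w e) * C1 i) := by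
    rw [hsplit]
    refine Finset.sum_congr rfl fun i _ => ?_
    rw [Finset.sum_mul, Finset.mul_sum]
    refine Finset.sum_congr rfl fun e he => ?_
    rw [hw' i e he]
    ring
  have hA0 : 0 ≤ ∑ e ∈ E, ℓ e * w' e := by
    rw [hA]
    refine Finset.sum_nonneg fun i _ => mul_nonneg (ha i).le (mul_nonneg ?_ (hC1pos i).le)
    exact Finset.sum_nonneg fun e he =>
      mul_nonneg (hℓ e (hmem i e he)) (hw e (hmem i e he)).le
  have hAM : ∑ e ∈ E, ℓ e * w' e ≤ ⨆ i : Fin s, (∑ e ∈ Ep i, ℓ e * w e) * C1 i := by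
    rw [hA]
    calc _ ≤ ∑ i, a i * (⨆ i : Fin s, (∑ e ∈ Ep i, ℓ e * w e) * C1 i) := by
          refine Finset.sum_le_sum fun i _ => mul_le_mul_of_nonneg_left ?_ (ha i).le
          exact le_ciSup (f := fun i : Fin s => (∑ e ∈ Ep i, ℓ e * w e) * C1 i)
            (Set.finite_range _).bddAbove i
      _ = _ := by rw [← Finset.sum_mul, hasum, one_mul]
  have hB : (⨆ y : Y, ∑ e ∈ E, ℓ e * (p y e) ^ 2 / w' e) ≤ 1 := by
    refine ciSup_le fun y => ?_
    rw [hsplit, ← hasum]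
    refine Finset.sum_le_sum fun i _ => ?_
    have h1 : ∑ e ∈ Ep i, ℓ e * (p y e) ^ 2 / (w e * (a i) ^ 2) ≤ C1 i := by
      rw [hC1 i]
      exact le_ciSup (f := fun y : Y => ∑ e ∈ Ep i, ℓ e * (p y e) ^ 2 / (w e * (a i) ^ 2))
        (Set.finite_range _).bddAbove y
    have hai := (ha i).ne'
    have hci := (hC1pos i).ne'
    have h2 : ∑ e ∈ Ep i, ℓ e * (p y e) ^ 2 / w' e
        = a i / C1 i * ∑ e ∈ Ep i, ℓ e * (p y e) ^ 2 / (w e * (a i) ^ 2) := by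
      rw [Finset.mul_sum]
      refine Finset.sum_congr rfl fun e he => ?_
      have hwe := (hw e (hmem i e he)).ne'
      rw [hw' i e he]
      field_simp
    rw [h2]
    calc _ ≤ a i / C1 i * C1 i :=
          mul_le_mul_of_nonneg_left h1 (div_pos (ha i) (hC1pos i)).le
      _ = a i := div_mul_cancel₀ _ hci
  exact (mul_le_of_le_one_right hA0 hB).trans hAM
end

section
/- Let V be a finite set, and for each v ∈ V let E_v be a finite set of edges, with the E_v pairwise disjoint; let ℓ : ⋃_v E_v → ℝ_{≥0} and w : ⋃_v E_v → ℝ_{>0}; let Y be a nonempty finite set, and for each y ∈ Y let p_y : ⋃_v E_v → ℝ_{≥0} and let P_{y,v} ≥ 0 (the flow value of p_y through E_v). Let W_y ⊆ V, and suppose: (1) there is ω ≥ 1 with |W_y| = ω for all y; (2) for v ∉ W_y, P_{y,v} = 0 and p_y(e) = 0 for all e ∈ E_v; (3) for v ∈ W_y, P_{y,v} = P_y/ω where P_y = Σ_{v∈V} P_{y,v} > 0. Define C₀(E_v) = Σ_{e∈E_v} ℓ(e)w(e) and C₁(E_v) = max{ Σ_{e∈E_v} ℓ(e)p_y(e)²/(w(e)P_{y,v}²)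 : y ∈ Y with P_{y,v} > 0 } (and 0 if no such y). Then (Σ_{v∈V} C₀(E_v)) · (max_{y∈Y} Σ_{v∈V} Σ_{e∈E_v} ℓ(e)p_y(e)²/(w(e)P_y²)) ≤ (max_{v∈V} C₀(E_v)) · (max_{v∈V} C₁(E_v)) · |V|/ω. -/
/-- **Lemma 9 of the paper, analytic form.** `Ev v` are pairwise disjoint edge sets attached
to the vertices `v ∈ V` of the beginning of a stage, `Ws y` is the set of vertices receiving
positive flow under `p y` (of size `ω` independent of `y`), `P y v` is the flow value of
`p y` through `Ev v`, and the incoming flow splits equally among the vertices of `Ws y`.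
Then the squared complexity of the stage is bounded by the product of the maximal negative
complexity, the maximal positive complexity, and the vertex ratio `|V|/ω`. -/
theorem stage_vertex_ratio {β : Type} [DecidableEq β] {V : Type} [Fintype V]
    (Ev : V → Finset β)
    (hdisj : ∀ u v : V, u ≠ v → Disjoint (Ev u) (Ev v))
    (ℓ : β → ℝ) (hℓ : ∀ v : V, ∀ e ∈ Ev v, 0 ≤ ℓ e)
    (w : β → ℝ) (hw : ∀ v : V, ∀ e ∈ Ev v, 0 < w e)
    {Y : Type} [Fintype Y] [Nonempty Y]
    (p : Y → β → ℝ) (hp : ∀ (y : Y) (v : V), ∀ e ∈ Ev v, 0 ≤ p y e)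
    (P : Y → V → ℝ) (hP : ∀ (y : Y) (v : V), 0 ≤ P y v)
    (Ws : Y → Finset V)
    (ω : ℕ) (hω : 1 ≤ ω)
    (hWcard : ∀ y : Y, (Ws y).card = ω)
    (hzero : ∀ (y : Y) (v : V), v ∉ Ws y → P y v = 0 ∧ ∀ e ∈ Ev v, p y e = 0)
    (hPpos : ∀ y : Y, 0 < ∑ v : V, P y v)
    (hunif : ∀ y : Y, ∀ v ∈ Ws y, P y v = (∑ v' : V, P y v') / (ω : ℝ)) :
    (∑ v : V, ∑ e ∈ Ev v, ℓ e * w e) *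
        (⨆ y : Y, ∑ v : V, ∑ e ∈ Ev v,
          ℓ e * (p y e) ^ 2 / (w e * (∑ v' : V, P y v') ^ 2)) ≤
      (⨆ v : V, ∑ e ∈ Ev v, ℓ e * w e) *
        (⨆ v : V, ⨆ y : {y : Y // 0 < P y v},
          ∑ e ∈ Ev v, ℓ e * (p y.1 e) ^ 2 / (w e * (P y.1 v) ^ 2)) *
        ((Fintype.card V : ℝ) / (ω : ℝ)) := by
  classical
  have hω0 : (0 : ℝ) < ω := by exact_mod_cast hω
  set A := ⨆ v : V, ∑ e ∈ Ev v, ℓ e * w e with hA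
  set B := ⨆ v : V, ⨆ y : {y : Y // 0 < P y v},
          ∑ e ∈ Ev v, ℓ e * (p y.1 e) ^ 2 / (w e * (P y.1 v) ^ 2) with hB
  have hC1 : ∀ (v : V) (y : Y) (c : ℝ),
      0 ≤ ∑ e ∈ Ev v, ℓ e * (p y e) ^ 2 / (w e * c ^ 2) := fun v y c =>
    Finset.sum_nonneg fun e he =>
      div_nonneg (mul_nonneg (hℓ v e he) (sq_nonneg _))
        (mul_nonneg (hw v e he).le (sq_nonneg _))
  have hA0 : 0 ≤ A := Real.iSup_nonneg fun v =>
    Finset.sum_nonneg fun e he => mul_nonneg (hℓ v e he) (hw v e he).le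
  have hB0 : 0 ≤ B := Real.iSup_nonneg fun v => Real.iSup_nonneg fun y => hC1 v y.1 _
  have hAle : ∑ v : V, ∑ e ∈ Ev v, ℓ e * w e ≤ Fintype.card V * A := by
    have h := Finset.sum_le_card_nsmul (Finset.univ : Finset V)
      (fun v => ∑ e ∈ Ev v, ℓ e * w e) A
      (fun v _ => le_ciSup (f := fun v : V => ∑ e ∈ Ev v, ℓ e * w e)
        (Set.finite_range _).bddAbove v)
    simpa [nsmul_eq_mul] using h
  have hBle : ∀ (v : V) (y : Y), 0 < P y v →
      ∑ e ∈ Ev v, ℓ e * (p y e) ^ 2 / (w e * (P y v) ^ 2) ≤ B := by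
    intro v y hy
    have h1 := le_ciSup (f := fun y : {y : Y // 0 < P y v} =>
      ∑ e ∈ Ev v, ℓ e * (p y.1 e) ^ 2 / (w e * (P y.1 v) ^ 2))
        (Set.finite_range _).bddAbove ⟨y, hy⟩
    have h2 := le_ciSup (f := fun v : V => ⨆ y : {y : Y // 0 < P y v},
      ∑ e ∈ Ev v, ℓ e * (p y.1 e) ^ 2 / (w e * (P y.1 v) ^ 2))
        (Set.finite_range _).bddAbove v
    exact h1.trans h2
  have hS : (⨆ y : Y, ∑ v : V, ∑ e ∈ Ev v,
          ℓ e * (p y e) ^ 2 / (w e * (∑ v' : V, P y v') ^ 2)) ≤ B / ω := by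
    refine ciSup_le fun y => ?_
    have h0 : ∑ v : V, ∑ e ∈ Ev v, ℓ e * (p y e) ^ 2 / (w e * (∑ v' : V, P y v') ^ 2)
        = ∑ v ∈ Ws y, ∑ e ∈ Ev v,
          ℓ e * (p y e) ^ 2 / (w e * (∑ v' : V, P y v') ^ 2) := by
      symm
      refine Finset.sum_subset (Finset.subset_univ _) fun v _ hv => ?_
      refine Finset.sum_eq_zero fun e he => ?_
      rw [(hzero y v hv).2 e he]
      simp
    have h1 : ∀ v ∈ Ws y, ∑ e ∈ Ev v,
        ℓ e * (p y e) ^ 2 / (w e * (∑ v' : V, P y v') ^ 2) ≤ B / (ω : ℝ) ^ 2 := by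
      intro v hv
      have hu := hunif y v hv
      have hpos : 0 < P y v := by
        rw [hu]
        exact div_pos (hPpos y) hω0
      have hs : ∑ v' : V, P y v' = P y v * ω := by
        rw [hu]
        field_simp
      rw [hs]
      refine le_trans (le_of_eq ?_)
        (div_le_div_of_nonneg_right (hBle v y hpos) (sq_nonneg (ω : ℝ)))
      rw [Finset.sum_div]
      refine Finset.sum_congr rfl fun e _ => ?_
      rw [div_div, mul_pow, mul_assoc]
    rw [h0]
    have h2 := Finset.sum_le_card_nsmul (Ws y) _ _ h1
    rw [hWcard y, nsmul_eq_mul] at h2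
    refine h2.trans (le_of_eq ?_)
    field_simp
  have hS0 : 0 ≤ (⨆ y : Y, ∑ v : V, ∑ e ∈ Ev v,
          ℓ e * (p y e) ^ 2 / (w e * (∑ v' : V, P y v') ^ 2)) :=
    Real.iSup_nonneg fun y => Finset.sum_nonneg fun v _ => hC1 v y _
  calc _ ≤ (Fintype.card V * A) * (B / ω) :=
        mul_le_mul hAle hS hS0 (mul_nonneg (Nat.cast_nonneg _) hA0)
    _ = _ := by ring
end

section
/- Let 𝒱 be a finite set equipped with an action of the symmetric group S_n, let ℰ ⊆ 𝒱×𝒱 be invariant under the diagonal action (i.e., (u,v) ∈ ℰ implies (σ(u),σ(v)) ∈ ℰ for every σ ∈ S_n), let Y be a nonempty set, and for each y ∈ Y let p_y : ℰ → ℝ. Suppose S_n acts transitively on the flows, i.e., for every y, y′ ∈ Y there exists τ ∈ S_n with p_y((u,v)) = p_{y′}((τ(u),τ(v))) for all (u,v) ∈ ℰ. Then for every u ∈ 𝒱, the quantity Σ_{v ∈ [u]} Σ_{w : (v,w)∈ℰ} p_y((v,w)) is independent of y ∈ Y, and likewise Σ_{v ∈ [u]} Σ_{w : (w,v)∈ℰ}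 p_y((w,v)) is independent of y ∈ Y, where [u] = {σ(u) : σ ∈ S_n} denotes the orbit of u. -/
open Classical in
/-- **Lemma 11 of the paper (transitive flows are consistent with orbits).** If the symmetric
group `S_n` acts on the vertex set `V`, the edge set `E` is invariant under the diagonal
action, and `S_n` acts transitively on the flows `p y`, then for every vertex `u`, the total
flow on the edges leaving (respectively entering) the orbit `[u]` is independent of `y`. -/
theorem transitive_flows_consistent {n : ℕ} {V : Type} [Fintype V] [DecidableEq V]
    [MulAction (Equiv.Perm (Fin n)) V]
    (E : Finset (V × V))
    (hEinv : ∀ e ∈ E, ∀ σ : Equiv.Perm (Fin n), (σ • e.1, σ • e.2) ∈ E)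
    {Y : Type} [Nonempty Y] (p : Y → V × V → ℝ)
    (htrans : ∀ y y' : Y, ∃ τ : Equiv.Perm (Fin n),
      ∀ e ∈ E, p y e = p y' (τ • e.1, τ • e.2)) :
    ∀ u : V, ∀ y y' : Y,
      (∑ e ∈ E, if e.1 ∈ MulAction.orbit (Equiv.Perm (Fin n)) u then p y e else 0) =
        (∑ e ∈ E, if e.1 ∈ MulAction.orbit (Equiv.Perm (Fin n)) u then p y' e else 0) ∧
      (∑ e ∈ E, if e.2 ∈ MulAction.orbit (Equiv.Perm (Fin n)) u then p y e else 0) =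
        (∑ e ∈ E, if e.2 ∈ MulAction.orbit (Equiv.Perm (Fin n)) u then p y' e else 0) := by
  intro u y y'
  obtain ⟨τ, hτ⟩ := htrans y y'
  have horb : ∀ v : V, τ • v ∈ MulAction.orbit (Equiv.Perm (Fin n)) u ↔
      v ∈ MulAction.orbit (Equiv.Perm (Fin n)) u := by
    intro v
    rw [← MulAction.orbit_eq_iff, ← MulAction.orbit_eq_iff, MulAction.orbit_smul]
  constructor
  all_goals
    refine Finset.sum_bij' (fun e _ => (τ • e.1, τ • e.2)) (fun e _ => (τ⁻¹ • e.1, τ⁻¹ • e.2))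
      (fun e he => hEinv e he τ) (fun e he => hEinv e he τ⁻¹) ?_ ?_ ?_
    · intro e _
      simp only [inv_smul_smul]
    · intro e _
      simp only [smul_inv_smul]
    · intro e he
      simp only [horb, hτ e he]
end
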